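/- arXiv:2112.02928 — 4 statements merged into one kernel-verified Lean document; each statement's English description precedes it below -/
import Mathlib

section
/- Let p > 0, ν ∈ ℂ, x > 0, and let c > max(0, −Re(ν)). Then Krätzel's integral admits the Mellin–Barnes representation F_{p,ν}(x) = (1/(2πi p)) ∫_{c−i∞}^{c+i∞} Γ(s) Γ((s+ν)/p) x^{−s} ds, i.e. F_{p,ν}(x) = (1/(2π p)) ∫_{−∞}^{∞} Γ(c+it) Γ((c+it+ν)/p) x^{−(c+it)} dt, where the integral converges absolutely. -/
open MeasureTheory Set Complex

theorem kmb_norm_Gamma_le (s : ℂ) (hs : 0 < s.re) : ‖Complex.Gamma s‖ ≤ Real.Gamma s.re := by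
  rw [Complex.Gamma_eq_integral hs, Real.Gamma_eq_integral hs, Complex.GammaIntegral]
  refine (norm_integral_le_integral_norm _).trans (le_of_eq ?_)
  refine setIntegral_congr_fun measurableSet_Ioi fun x hx => ?_
  have hx' : 0 < x := hx
  simp only [norm_mul]
  rw [Complex.norm_of_nonneg (Real.exp_pos _).le, norm_cpow_eq_rpow_re_of_pos hx']
  simp

theorem kmb_re (c t : ℝ) : ((c : ℂ) + t * I).re = c := by simp

theorem kmb_cont (c : ℝ) (w : ℂ) (p : ℝ) (hp : 0 < p) (h : 0 < c + w.re) :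
    Continuous (fun t : ℝ => Complex.Gamma ((c + t * I + w) / p)) := by
  rw [continuous_iff_continuousAt]
  intro t
  have hre : 0 < (((c : ℂ) + t * I + w) / p).re := by
    rw [Complex.div_ofReal_re]
    simp only [add_re, kmb_re]
    exact div_pos (by simpa using h) hp
  have hd : ContinuousAt Complex.Gamma (((c : ℂ) + t * I + w) / p) := by
    refine (Complex.differentiableAt_Gamma _ fun m hm => ?_).continuousAt
    rw [hm] at hre
    have : (0 : ℝ) ≤ m := Nat.cast_nonneg m
    simp at hre
    linarith
  exact ContinuousAt.comp (f := fun t : ℝ => ((c : ℂ) + t * I + w) / p) hd (by fun_prop)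

theorem kmb_int (c : ℝ) (hc : 0 < c) : Integrable (fun t : ℝ => Complex.Gamma (c + t * I)) := by
  have hcont : Continuous (fun t : ℝ => Complex.Gamma (c + t * I)) := by
    simpa using kmb_cont c 0 1 one_pos (by simpa using hc)
  have hi : Integrable (fun t : ℝ => Real.Gamma (c + 2) * (c⁻¹ ^ 2 * (1 + (t * c⁻¹) ^ 2)⁻¹)) := by
    refine Integrable.const_mul (Integrable.const_mul ?_ _) _
    exact integrable_inv_one_add_sq.comp_mul_right' (by positivity)
  refine hi.mono' hcont.aestronglyMeasurable (Filter.Eventually.of_forall fun t => ?_)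
  have e : c⁻¹ ^ 2 * (1 + (t * c⁻¹) ^ 2)⁻¹ = (c ^ 2 + t ^ 2)⁻¹ := by
    field_simp
  rw [e]
  set s : ℂ := c + t * I with hs
  have hsre : s.re = c := kmb_re c t
  have hsim : s.im = t := by simp [hs]
  have h0 : s ≠ 0 := fun h => by rw [h] at hsre; simp at hsre; linarith
  have h1 : s + 1 ≠ 0 := fun h => by
    have := congrArg Complex.re h
    simp [hsre] at this; linarith
  have hG : Complex.Gamma (s + 1 + 1) = (s + 1) * (s * Complex.Gamma s) := by
    rw [Complex.Gamma_add_one _ h1, Complex.Gamma_add_one _ h0]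
  have hb := kmb_norm_Gamma_le (s + 1 + 1) (by simp [hsre]; linarith)
  rw [hG] at hb
  have hr : (s + 1 + 1).re = c + 2 := by simp [hsre]; ring
  rw [hr, norm_mul, norm_mul] at hb
  have hn : ‖s‖ ^ 2 = c ^ 2 + t ^ 2 := by
    rw [← Complex.normSq_eq_norm_sq, Complex.normSq_apply, hsre, hsim]; ring
  have hn1 : ‖s + 1‖ ^ 2 = (c + 1) ^ 2 + t ^ 2 := by
    rw [← Complex.normSq_eq_norm_sq, Complex.normSq_apply]; simp [hsre, hsim]; ring
  have hle : ‖s‖ ≤ ‖s + 1‖ := by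
    apply le_of_sq_le_sq _ (norm_nonneg _)
    rw [hn, hn1]; nlinarith
  rw [← div_eq_mul_inv, le_div_iff₀ (by positivity), ← hn]
  refine le_trans ?_ hb
  have : ‖s‖ * ‖s‖ ≤ ‖s + 1‖ * ‖s‖ := by gcongr
  nlinarith [norm_nonneg (Complex.Gamma s)]

theorem kmb_conv (s : ℂ) (hs : 0 < s.re) :
    MellinConvergent (fun y : ℝ => ((Real.exp (-y) : ℝ) : ℂ)) s := by
  have := Complex.GammaIntegral_convergent hs
  refine this.congr_fun (fun t _ => ?_) measurableSet_Ioi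
  simp [mul_comm]

theorem kmb_mellin (s : ℂ) (hs : 0 < s.re) :
    mellin (fun y : ℝ => ((Real.exp (-y) : ℝ) : ℂ)) s = Complex.Gamma s := by
  rw [Complex.Gamma_eq_integral hs, Complex.GammaIntegral_eq_mellin]

theorem kmb_inv (c : ℝ) (hc : 0 < c) (y : ℝ) (hy : 0 < y) :
    (1 / (2 * Real.pi) : ℂ) * ∫ t : ℝ, (y : ℂ) ^ (-((c : ℂ) + t * I)) * Complex.Gamma (c + t * I)
      = ((Real.exp (-y) : ℝ) : ℂ) := by
  have hm : ∀ t : ℝ, mellin (fun y : ℝ => ((Real.exp (-y) : ℝ) : ℂ)) ((c : ℂ) + t * I)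
      = Complex.Gamma (c + t * I) := fun t => kmb_mellin _ (by rw [kmb_re]; exact hc)
  have h := mellinInv_mellin_eq c (fun y : ℝ => ((Real.exp (-y) : ℝ) : ℂ)) hy
    (kmb_conv _ (by simpa using hc)) (by
      unfold Complex.VerticalIntegrable
      simp_rw [hm]
      exact kmb_int c hc) (by fun_prop)
  unfold mellinInv at h
  simp_rw [hm] at h
  rw [← h]
  simp [Complex.real_smul]

theorem kratzel_mellin_barnes (p : ℝ) (hp : 0 < p) (ν : ℂ) (x : ℝ) (hx : 0 < x)
    (c : ℝ) (hc : max 0 (-ν.re) < c) :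
    Integrable (fun t : ℝ =>
      Complex.Gamma (c + t * I) * Complex.Gamma ((c + t * I + ν) / p)
        * (x : ℂ) ^ (-(c + t * I))) ∧
    ∫ t in Ioi (0 : ℝ), (t : ℂ) ^ (ν - 1) * Complex.exp (-((t ^ p : ℝ) : ℂ) - ((x / t : ℝ) : ℂ))
      = (1 / (2 * Real.pi * p) : ℂ) * ∫ t : ℝ,
          Complex.Gamma (c + t * I) * Complex.Gamma ((c + t * I + ν) / p)
            * (x : ℂ) ^ (-(c + t * I)) := by
  have hc0 : 0 < c := (le_max_left _ _).trans_lt hc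
  have hcν : 0 < c + ν.re := by linarith [(le_max_right 0 (-ν.re)).trans_lt hc]
  have hx0 : (x : ℂ) ≠ 0 := ofReal_ne_zero.2 hx.ne'
  have hre : ∀ u : ℝ, (((c : ℂ) + u * I + ν) / p).re = (c + ν.re) / p := fun u => by
    rw [Complex.div_ofReal_re, add_re, kmb_re]
  have hrepos : 0 < (c + ν.re) / p := div_pos hcν hp
  have hxc : Continuous (fun u : ℝ => (x : ℂ) ^ (-((c : ℂ) + u * I))) := by
    refine Continuous.const_cpow (by fun_prop) (Or.inl hx0)
  have hB : Integrable (fun u : ℝ => Complex.Gamma (c + u * I) * (x : ℂ) ^ (-((c : ℂ) + u * I))) := by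
    refine (kmb_int c hc0).mul_bdd (c := x ^ (-c)) hxc.aestronglyMeasurable
      (Filter.Eventually.of_forall fun u => ?_)
    rw [norm_cpow_eq_rpow_re_of_pos hx]
    simp
  refine ⟨?_, ?_⟩
  · have := hB.mul_bdd (c := Real.Gamma ((c + ν.re) / p))
      (kmb_cont c ν p hp hcν).aestronglyMeasurable
      (Filter.Eventually.of_forall fun u => by
        rw [← hre u]
        exact kmb_norm_Gamma_le _ (by rw [hre]; exact hrepos))
    refine this.congr (Filter.Eventually.of_forall fun u => ?_)
    simp only
    ring
  have hconv : ∀ u : ℝ, MellinConvergent (fun t : ℝ => ((Real.exp (-(t ^ p)) : ℝ) : ℂ))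
      ((c : ℂ) + u * I + ν) := fun u => by
    rw [MellinConvergent.comp_rpow (f := fun t : ℝ => ((Real.exp (-t) : ℝ) : ℂ)) hp.ne']
    exact kmb_conv _ (by rw [hre]; exact hrepos)
  have hmel : ∀ u : ℝ, mellin (fun t : ℝ => ((Real.exp (-(t ^ p)) : ℝ) : ℂ))
      ((c : ℂ) + u * I + ν) = (p : ℂ)⁻¹ * Complex.Gamma ((c + u * I + ν) / p) := fun u => by
    rw [mellin_comp_rpow (fun t : ℝ => ((Real.exp (-t) : ℝ) : ℂ)),
      kmb_mellin _ (by rw [hre]; exact hrepos), abs_of_pos hp, Complex.real_smul, ofReal_inv]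
  -- the kernel
  let A : ℝ → ℂ := fun t => (t : ℂ) ^ ((c : ℂ) + ν - 1) * ((Real.exp (-(t ^ p)) : ℝ) : ℂ)
  let B : ℝ → ℂ := fun u => Complex.Gamma (c + u * I) * (x : ℂ) ^ (-((c : ℂ) + u * I))
  let E : ℝ → ℝ → ℂ := fun t u => Complex.exp (((Real.log t * u : ℝ) : ℂ) * I)
  have hA : Integrable A (volume.restrict (Ioi 0)) := by
    have := hconv 0
    simpa [MellinConvergent, IntegrableOn, A] using this
  have hE : ∀ t u : ℝ, 0 < t → E t u = (t : ℂ) ^ ((u : ℂ) * I) := fun t u ht => by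
    rw [cpow_def_of_ne_zero (ofReal_ne_zero.2 ht.ne'), ← Complex.ofReal_log ht.le]
    simp only [E]
    push_cast
    ring_nf
  have hK : Integrable (Function.uncurry fun t u => E t u * (A t * B u))
      ((volume.restrict (Ioi 0)).prod volume) := by
    refine (Integrable.mul_prod hA hB).bdd_mul (c := 1) (f := fun z : ℝ × ℝ => E z.1 z.2) ?_ ?_
    · apply Measurable.aestronglyMeasurable
      simp only [E]
      fun_prop
    · refine Filter.Eventually.of_forall fun z => ?_
      simp only [E]
      rw [Complex.norm_exp_ofReal_mul_I]
  have hswap := integral_integral_swap hK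
  have hL : ∫ t in Ioi (0 : ℝ),
      (t : ℂ) ^ (ν - 1) * Complex.exp (-((t ^ p : ℝ) : ℂ) - ((x / t : ℝ) : ℂ))
      = (1 / (2 * Real.pi) : ℂ) * ∫ t in Ioi (0 : ℝ), ∫ u : ℝ, E t u * (A t * B u) := by
    rw [← integral_const_mul]
    refine setIntegral_congr_fun measurableSet_Ioi fun t ht => ?_
    have ht' : 0 < t := ht
    have ht0 : (t : ℂ) ≠ 0 := ofReal_ne_zero.2 ht'.ne'
    have e1 : ∀ u : ℝ, E t u * (A t * B u) = ((t : ℂ) ^ (ν - 1) * ((Real.exp (-(t ^ p)) : ℝ) : ℂ)) *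
        (((x / t : ℝ) : ℂ) ^ (-((c : ℂ) + u * I)) * Complex.Gamma (c + u * I)) := fun u => by
      rw [hE t u ht']
      simp only [A, B]
      have e2 : ((x / t : ℝ) : ℂ) ^ (-((c : ℂ) + u * I))
          = (x : ℂ) ^ (-((c : ℂ) + u * I)) * (t : ℂ) ^ ((c : ℂ) + u * I) := by
        rw [div_eq_mul_inv, ofReal_mul, mul_cpow_ofReal_nonneg hx.le (inv_pos.2 ht').le,
          ofReal_inv, Complex.inv_cpow _ _ (by
            rw [Complex.arg_ofReal_of_nonneg ht'.le]; exact Real.pi_pos.ne),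
          ← Complex.cpow_neg, neg_neg]
      rw [e2, show (c : ℂ) + ν - 1 = c + (ν - 1) by ring, cpow_add _ _ ht0, cpow_add _ _ ht0]
      ring
    simp_rw [e1]
    rw [integral_const_mul, mul_left_comm, kmb_inv c hc0 (x / t) (div_pos hx ht'), mul_assoc,
      ← ofReal_mul, ← Real.exp_add, ofReal_exp]
    push_cast
    ring_nf
  have hR : ∫ u : ℝ, ∫ t in Ioi (0 : ℝ), E t u * (A t * B u)
      = (p : ℂ)⁻¹ * ∫ t : ℝ,
          Complex.Gamma (c + t * I) * Complex.Gamma ((c + t * I + ν) / p)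
            * (x : ℂ) ^ (-(c + t * I)) := by
    rw [← integral_const_mul]
    refine integral_congr_ae (Filter.Eventually.of_forall fun u => ?_)
    simp only
    have e3 : ∫ t in Ioi (0 : ℝ), E t u * (A t * B u)
        = (∫ t in Ioi (0 : ℝ), (t : ℂ) ^ ((c : ℂ) + u * I + ν - 1) •
            ((Real.exp (-(t ^ p)) : ℝ) : ℂ)) * B u := by
      rw [← integral_mul_const]
      refine setIntegral_congr_fun measurableSet_Ioi fun t ht => ?_
      have ht' : 0 < t := ht
      have ht0 : (t : ℂ) ≠ 0 := ofReal_ne_zero.2 ht'.ne'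
      simp only [smul_eq_mul]
      rw [hE t u ht', show (c : ℂ) + u * I + ν - 1 = u * I + (c + ν - 1) by ring, cpow_add _ _ ht0]
      simp only [A]
      ring
    have e4 := hmel u
    unfold mellin at e4
    rw [e3, e4]
    simp only [B]
    ring
  rw [hL, hswap, hR, ← mul_assoc]
  congr 1
  rw [one_div, one_div, mul_inv _ (p : ℂ)]
end

section
/- Let p > 0 and ν ∈ ℂ. Set X(x) = p^(1/(p+1)) x^(p/(p+1)) for x > 0. Then, as x → +∞, F_{p,ν}(x) = √(2π/((p+1)X(x))) · (x/p)^(ν/(p+1)) · exp(−(p+1)(x/p)^(p/(p+1))) · (1 + o(1)); that is, the quotient of F_{p,ν}(x) by the displayed leading term tends to 1. -/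
open MeasureTheory Set Filter

lemma kr_exp_lim (w : ℝ) :
    Tendsto (fun r : ℝ => r ^ 2 * (Real.exp (w / r) - 1 - w / r)) atTop (nhds (w ^ 2 / 2)) := by
  have h0 : Tendsto (fun r : ℝ => w / r) atTop (nhds 0) := tendsto_const_nhds.div_atTop tendsto_id
  have h1 := (Real.exp_sub_sum_range_succ_isLittleO_pow 2).comp_tendsto h0
  have h2 := (h1.const_mul_left (1 : ℝ)).tendsto_div_nhds_zero
  have h3 : Tendsto (fun r : ℝ => w ^ 2 * ((Real.exp (w / r) - 1 - w / r - (w / r) ^ 2 / 2) / (w / r) ^ 2)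
      + w ^ 2 / 2) atTop (nhds (w ^ 2 / 2)) := by
    have := (h2.const_mul (w ^ 2)).add_const (w ^ 2 / 2)
    rw [mul_zero, zero_add] at this
    refine this.congr fun r => ?_
    simp [Finset.sum_range_succ, Function.comp]
    ring_nf
    tauto
  refine h3.congr' ?_
  filter_upwards [eventually_gt_atTop 0] with r hr
  by_cases hw : w = 0
  · simp [hw]
  · field_simp
    ring

/-- the shifted phase function -/
noncomputable def krPsi (p s : ℝ) : ℝ :=
  (Real.exp (p * s) - 1 - p * s) + p * (Real.exp (-s) - 1 + s)

lemma krPsi_lower (p : ℝ) (hp : 0 < p) (s : ℝ) : min p (p ^ 2) / 2 * s ^ 2 ≤ krPsi p s := by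
  unfold krPsi
  have a1 := Real.add_one_le_exp (p * s)
  have a2 := Real.add_one_le_exp (-s)
  rcases le_total 0 s with h | h
  · have h1 := Real.quadratic_le_exp_of_nonneg (mul_nonneg hp.le h)
    have h2 : 0 ≤ p * (Real.exp (-s) - 1 + s) := mul_nonneg hp.le (by linarith)
    have h3 : min p (p ^ 2) / 2 * s ^ 2 ≤ p ^ 2 / 2 * s ^ 2 := by
      gcongr; exact min_le_right _ _
    nlinarith
  · have h1 := Real.quadratic_le_exp_of_nonneg (neg_nonneg.2 h)
    have h2 : p * (s ^ 2 / 2) ≤ p * (Real.exp (-s) - 1 + s) :=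
      mul_le_mul_of_nonneg_left (by nlinarith) hp.le
    have h3 : min p (p ^ 2) / 2 * s ^ 2 ≤ p / 2 * s ^ 2 := by
      gcongr; exact min_le_left _ _
    nlinarith

lemma krPsi_lim (p u : ℝ) :
    Tendsto (fun r : ℝ => r ^ 2 * krPsi p (u / r)) atTop (nhds (p * (p + 1) / 2 * u ^ 2)) := by
  have h := (kr_exp_lim (p * u)).add ((kr_exp_lim (-u)).const_mul p)
  convert h using 1
  · funext r
    unfold krPsi
    rw [mul_div_assoc, neg_div]
    ring
  · congr 1; ring

lemma kr_laplace (p : ℝ) (hp : 0 < p) (ν : ℂ) :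
    Tendsto (fun r : ℝ => ∫ u : ℝ, Complex.exp (ν * (u / r : ℝ))
        * ((Real.exp (-(r ^ 2 * krPsi p (u / r))) : ℝ) : ℂ)) atTop
      (nhds ((Real.sqrt (2 * Real.pi / (p * (p + 1))) : ℝ) : ℂ)) := by
  have hg : ((Real.sqrt (2 * Real.pi / (p * (p + 1))) : ℝ) : ℂ)
      = ∫ u : ℝ, ((Real.exp (-(p * (p + 1) / 2) * u ^ 2) : ℝ) : ℂ) := by
    rw [integral_complex_ofReal, integral_gaussian]
    congr 2
    field_simp
  rw [hg]
  set c := min p (p ^ 2) / 2 with hc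
  have hc0 : 0 < c := by positivity
  set b := ‖ν‖
  refine tendsto_integral_filter_of_dominated_convergence
    (fun u => Real.exp (b ^ 2 / (2 * c)) * Real.exp (-(c / 2) * u ^ 2)) ?_ ?_ ?_ ?_
  · refine Eventually.of_forall fun r => ?_
    unfold krPsi
    exact Continuous.aestronglyMeasurable (by fun_prop)
  · filter_upwards [eventually_ge_atTop 1] with r hr
    refine Eventually.of_forall fun u => ?_
    have hr0 : 0 < r := by linarith
    rw [norm_mul, Complex.norm_exp, Complex.norm_real, Real.norm_of_nonneg (Real.exp_pos _).le,
      ← Real.exp_add, ← Real.exp_add]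
    apply Real.exp_le_exp.2
    have e1 : (ν * ((u / r : ℝ) : ℂ)).re ≤ b * |u| := by
      refine (Complex.re_le_norm _).trans ?_
      rw [norm_mul, Complex.norm_real, Real.norm_eq_abs, abs_div, abs_of_pos hr0]
      exact mul_le_mul_of_nonneg_left (div_le_self (abs_nonneg u) hr) (norm_nonneg _)
    have e2 : c * u ^ 2 ≤ r ^ 2 * krPsi p (u / r) := by
      have := mul_le_mul_of_nonneg_left (krPsi_lower p hp (u / r)) (sq_nonneg r)
      refine le_trans (le_of_eq ?_) this
      rw [← hc]; field_simp
    have e3 : b * |u| ≤ b ^ 2 / (2 * c) + c / 2 * u ^ 2 := by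
      have : b ^ 2 / (2 * c) + c / 2 * u ^ 2 - b * |u| = (b - c * |u|) ^ 2 / (2 * c) := by
        rw [← sq_abs u]; field_simp; ring
      have h2 : 0 ≤ (b - c * |u|) ^ 2 / (2 * c) := by positivity
      linarith
    linarith
  · exact (integrable_exp_neg_mul_sq (by positivity)).const_mul _
  · refine Eventually.of_forall fun u => ?_
    have h0 : Tendsto (fun r : ℝ => u / r) atTop (nhds 0) :=
      tendsto_const_nhds.div_atTop tendsto_id
    have h1 : Tendsto (fun r : ℝ => Complex.exp (ν * (u / r : ℝ))) atTop (nhds 1) := by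
      have hcont : Continuous (fun y : ℝ => Complex.exp (ν * (y : ℝ))) := by fun_prop
      have := (hcont.tendsto 0).comp h0
      simpa [Function.comp_def] using this
    have h2 : Tendsto (fun r : ℝ => ((Real.exp (-(r ^ 2 * krPsi p (u / r))) : ℝ) : ℂ)) atTop
        (nhds ((Real.exp (-(p * (p + 1) / 2) * u ^ 2) : ℝ) : ℂ)) := by
      have hcont : Continuous (fun y : ℝ => ((Real.exp (-y) : ℝ) : ℂ)) := by fun_prop
      have := (hcont.tendsto _).comp (krPsi_lim p u)
      rw [neg_mul]
      exact this
    simpa using h1.mul h2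

/-- change of variables `t = T e^{u/r}` -/
lemma kr_subst (T r : ℝ) (hT : 0 < T) (hr : 0 < r) (g : ℝ → ℂ) :
    ∫ t in Ioi (0 : ℝ), g t
      = ∫ u : ℝ, (T * Real.exp (u / r) / r) • g (T * Real.exp (u / r)) := by
  have himg : (fun u : ℝ => T * Real.exp (u / r)) '' univ = Ioi 0 := by
    ext t
    simp only [image_univ, mem_range, mem_Ioi]
    constructor
    · rintro ⟨u, rfl⟩; positivity
    · intro ht
      refine ⟨r * Real.log (t / T), ?_⟩
      rw [mul_div_cancel_left₀ _ hr.ne', Real.exp_log (by positivity)]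
      field_simp
  have hinj : InjOn (fun u : ℝ => T * Real.exp (u / r)) univ := by
    intro a _ b _ hab
    have h1 := Real.exp_injective (mul_left_cancel₀ hT.ne' hab)
    exact (div_left_inj' hr.ne').1 h1
  have hder : ∀ u ∈ (univ : Set ℝ), HasDerivWithinAt (fun u : ℝ => T * Real.exp (u / r))
      (T * Real.exp (u / r) / r) univ u := by
    intro u _
    have := ((((hasDerivAt_id u).div_const r).exp).const_mul T).hasDerivWithinAt (s := univ)
    refine this.congr_deriv ?_
    simp only [id_eq]
    ring
  have := integral_image_eq_integral_abs_deriv_smul MeasurableSet.univ hder hinj g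
  rw [himg, Measure.restrict_univ] at this
  rw [this]
  congr 1; funext u
  rw [abs_of_pos (by positivity)]

lemma kr_formula (p : ℝ) (ν : ℂ) (x T r : ℝ) (hT : 0 < T) (hr : 0 < r)
    (hM : T ^ p = r ^ 2) (hx : x / T = p * r ^ 2) :
    (∫ t in Ioi (0 : ℝ), (t : ℂ) ^ (ν - 1)
          * Complex.exp (-((t ^ p : ℝ) : ℂ) - ((x / t : ℝ) : ℂ)))
      = ((1 / r : ℝ) : ℂ) * (T : ℂ) ^ ν * Complex.exp (-(((p + 1) * r ^ 2 : ℝ) : ℂ))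
        * ∫ u : ℝ, Complex.exp (ν * (u / r : ℝ))
        * ((Real.exp (-(r ^ 2 * krPsi p (u / r))) : ℝ) : ℂ) := by
  rw [kr_subst T r hT hr, ← integral_const_mul]
  congr 1; funext u
  set s := u / r
  have ht : 0 < T * Real.exp s := by positivity
  have htc : ((T * Real.exp s : ℝ) : ℂ) ≠ 0 := by exact_mod_cast ht.ne'
  have hTc : (T : ℂ) ≠ 0 := by exact_mod_cast hT.ne'
  have e1 : (((T * Real.exp s : ℝ)) : ℂ) ^ ν = (T : ℂ) ^ ν * Complex.exp (ν * (s : ℝ)) := by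
    rw [Complex.cpow_def_of_ne_zero htc, Complex.cpow_def_of_ne_zero hTc, ← Complex.exp_add,
      ← Complex.ofReal_log ht.le, ← Complex.ofReal_log hT.le,
      Real.log_mul hT.ne' (Real.exp_pos _).ne', Real.log_exp]
    push_cast
    ring_nf
  have e2 : (T * Real.exp s) ^ p = r ^ 2 * Real.exp (p * s) := by
    rw [Real.mul_rpow hT.le (Real.exp_pos _).le, hM, ← Real.exp_mul, mul_comm s p]
  have e3 : x / (T * Real.exp s) = p * r ^ 2 * Real.exp (-s) := by
    rw [← div_div, hx, Real.exp_neg]; rfl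
  have e4 : Complex.exp (-(((T * Real.exp s) ^ p : ℝ) : ℂ) - ((x / (T * Real.exp s) : ℝ) : ℂ))
      = Complex.exp (-(((p + 1) * r ^ 2 : ℝ) : ℂ))
        * ((Real.exp (-(r ^ 2 * krPsi p s)) : ℝ) : ℂ) := by
    rw [Complex.ofReal_exp, ← Complex.exp_add, e2, e3]
    congr 1
    unfold krPsi
    push_cast
    ring
  rw [e4, Complex.cpow_sub _ _ htc, Complex.cpow_one, e1, Complex.real_smul]
  have hrc : (r : ℂ) ≠ 0 := by exact_mod_cast hr.ne'
  have hs : Complex.exp (s : ℂ) ≠ 0 := Complex.exp_ne_zero _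
  push_cast
  field_simp

/-- Leading asymptotic behaviour of Krätzel's integral for `p > 0` as `x → +∞`:
`F_{p,ν}(x) ~ √(2π/((p+1)X)) (x/p)^(ν/(p+1)) exp(-(p+1)(x/p)^(p/(p+1)))`
where `X = p^(1/(p+1)) x^(p/(p+1))`. -/
theorem kratzel_leading_asymptotics (p : ℝ) (hp : 0 < p) (ν : ℂ)
    (X : ℝ → ℝ) (hX : ∀ x : ℝ, X x = p ^ (1 / (p + 1)) * x ^ (p / (p + 1))) :
    Tendsto (fun x : ℝ =>
      (∫ t in Ioi (0 : ℝ), (t : ℂ) ^ (ν - 1)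
          * Complex.exp (-((t ^ p : ℝ) : ℂ) - ((x / t : ℝ) : ℂ)))
        / ((Real.sqrt (2 * Real.pi / ((p + 1) * X x)) : ℂ)
            * ((x / p : ℝ) : ℂ) ^ (ν / (p + 1 : ℝ))
            * Complex.exp (-(((p + 1) * (x / p) ^ (p / (p + 1)) : ℝ) : ℂ))))
      atTop (nhds 1) := by
  have hr : Tendsto (fun x : ℝ => Real.sqrt ((x / p) ^ (p / (p + 1)))) atTop atTop :=
    Real.tendsto_sqrt_atTop.comp ((tendsto_rpow_atTop (by positivity)).comp
      (tendsto_id.atTop_div_const hp))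
  have hA : 0 < Real.sqrt (2 * Real.pi / (p * (p + 1))) :=
    Real.sqrt_pos.2 (by have := Real.pi_pos; positivity)
  have hAc : ((Real.sqrt (2 * Real.pi / (p * (p + 1))) : ℝ) : ℂ) ≠ 0 := by exact_mod_cast hA.ne'
  have hL := ((kr_laplace p hp ν).comp hr).div_const
    ((Real.sqrt (2 * Real.pi / (p * (p + 1))) : ℝ) : ℂ)
  rw [div_self hAc] at hL
  refine hL.congr' ?_
  filter_upwards [eventually_gt_atTop 0] with x hx
  have hxp : 0 < x / p := by positivity
  have hp1 : p + 1 ≠ 0 := by positivity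
  have hM : 0 < (x / p) ^ (p / (p + 1)) := by positivity
  set r := Real.sqrt ((x / p) ^ (p / (p + 1))) with hrdef
  have hr0 : 0 < r := Real.sqrt_pos.2 hM
  have hr2 : (x / p) ^ (p / (p + 1)) = r ^ 2 := (Real.sq_sqrt hM.le).symm
  have hT : 0 < (x / p) ^ (1 / (p + 1)) := by positivity
  have hTp : ((x / p) ^ (1 / (p + 1))) ^ p = r ^ 2 := by
    rw [← Real.rpow_mul hxp.le, ← hr2]; congr 1; field_simp
  have hxT : x / (x / p) ^ (1 / (p + 1)) = p * r ^ 2 := by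
    rw [div_eq_iff hT.ne', ← hr2, mul_assoc, ← Real.rpow_add hxp]
    have : p / (p + 1) + 1 / (p + 1) = 1 := by field_simp
    rw [this, Real.rpow_one]; field_simp
  have hXr : X x = p * r ^ 2 := by
    rw [hX, ← hr2, Real.div_rpow hx.le hp.le, mul_div_assoc', mul_div_right_comm]
    congr 1
    rw [eq_div_iff (by positivity), ← Real.rpow_add hp]
    have : 1 / (p + 1) + p / (p + 1) = 1 := by field_simp; ring
    rw [this, Real.rpow_one]
  have hsq : Real.sqrt (2 * Real.pi / ((p + 1) * X x))
      = Real.sqrt (2 * Real.pi / (p * (p + 1))) * (1 / r) := by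
    have : 2 * Real.pi / ((p + 1) * X x) = 2 * Real.pi / (p * (p + 1)) * (1 / r) ^ 2 := by
      rw [hXr]; field_simp
    rw [this, Real.sqrt_mul (by have := Real.pi_pos; positivity),
      Real.sqrt_sq (by positivity)]
  have hTν : (((x / p) ^ (1 / (p + 1)) : ℝ) : ℂ) ^ ν = ((x / p : ℝ) : ℂ) ^ (ν / (p + 1 : ℝ)) := by
    have h1 : ((x / p : ℝ) : ℂ) ≠ 0 := by exact_mod_cast hxp.ne'
    have h2 : (((x / p) ^ (1 / (p + 1)) : ℝ) : ℂ) ≠ 0 := by exact_mod_cast hT.ne'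
    rw [Complex.cpow_def_of_ne_zero h1, Complex.cpow_def_of_ne_zero h2,
      ← Complex.ofReal_log hT.le, ← Complex.ofReal_log hxp.le, Real.log_rpow hxp]
    congr 1
    push_cast
    ring
  rw [kr_formula p ν x _ r hT hr0 hTp hxT, hTν, hsq, hr2]
  have n1 : ((x / p : ℝ) : ℂ) ^ (ν / (p + 1 : ℝ)) ≠ 0 := by
    rw [← hTν, Complex.cpow_def_of_ne_zero (by exact_mod_cast hT.ne')]
    exact Complex.exp_ne_zero _
  have n2 := Complex.exp_ne_zero (-(((p + 1) * r ^ 2 : ℝ) : ℂ))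
  have n3 : ((1 / r : ℝ) : ℂ) ≠ 0 := by
    have : 1 / r ≠ 0 := by positivity
    exact_mod_cast this
  rw [Complex.ofReal_mul (Real.sqrt (2 * Real.pi / (p * (p + 1)))) (1 / r)]
  simp only [Function.comp]
  rw [← hrdef]
  generalize (∫ u : ℝ, Complex.exp (ν * (u / r : ℝ))
        * ((Real.exp (-(r ^ 2 * krPsi p (u / r))) : ℝ) : ℂ)) = I
  generalize ((x / p : ℝ) : ℂ) ^ (ν / (p + 1 : ℝ)) = a at *
  generalize Complex.exp (-(((p + 1) * r ^ 2 : ℝ) : ℂ)) = b at *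
  generalize ((1 / r : ℝ) : ℂ) = d at *
  generalize ((Real.sqrt (2 * Real.pi / (p * (p + 1))) : ℝ) : ℂ) = e at *
  field_simp
end

section
/- Let p > 0 and ν ∈ ℂ. Set X(x) = p^(1/(p+1)) x^(p/(p+1)) and B₁ = (2 + 12ν² − 12ν(p−1) − 7p + 2p²)/(24(p+1)). Then, as x → +∞, F_{p,ν}(x) = √(2π/((p+1)X(x))) · (x/p)^(ν/(p+1)) · exp(−(p+1)(x/p)^(p/(p+1))) · (1 + B₁/X(x) + O(X(x)^{−2})). -/
open MeasureTheory Set Filter Asymptotics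

/-- Division of an entire function by the variable. -/
lemma kz_div (f : ℂ → ℂ) (hf : Differentiable ℂ f) :
    Differentiable ℂ (dslope f 0) ∧ ∀ u, f u = f 0 + u * dslope f 0 u := by
  constructor
  · rw [← differentiableOn_univ] at hf ⊢
    exact (Complex.differentiableOn_dslope univ_mem).2 hf
  · intro u
    have := sub_smul_dslope f 0 u
    simp only [sub_zero, smul_eq_mul] at this
    rw [this]; ring

/-- Taylor expansion of the exponential with entire remainder. -/
lemma kz_exp : ∃ E : ℂ → ℂ, Differentiable ℂ E ∧ ∀ u, Complex.exp u =
    1 + u + u ^ 2 / 2 + u ^ 3 / 6 + u ^ 4 / 24 + u ^ 5 * E u := by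
  have hd : ∀ k : ℕ, Differentiable ℂ ((Function.swap dslope (0 : ℂ))^[k] Complex.exp) := by
    intro k
    induction k with
    | zero => exact Complex.differentiable_exp
    | succ k ih =>
      rw [Function.iterate_succ_apply']
      exact (kz_div _ ih).1
  have h0 : HasFPowerSeriesAt Complex.exp (NormedSpace.expSeries ℂ ℂ) 0 := by
    rw [Complex.exp_eq_exp_ℂ]
    exact NormedSpace.exp_hasFPowerSeriesAt_zero
  have hv : ∀ k : ℕ, ((Function.swap dslope (0 : ℂ))^[k] Complex.exp) 0 = 1 / (k.factorial : ℂ) := by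
    intro k
    rw [← (h0.has_fpower_series_iterate_dslope_fslope k).coeff_zero 1,
      ← FormalMultilinearSeries.coeff, FormalMultilinearSeries.coeff_iterate_fslope,
      zero_add]
    have := NormedSpace.expSeries_apply_eq (𝕂 := ℂ) (1 : ℂ) k
    rw [one_pow, smul_eq_mul, mul_one] at this
    rw [one_div]
    exact this
  have hs : ∀ k : ℕ, ∀ u, ((Function.swap dslope (0 : ℂ))^[k] Complex.exp) u =
      1 / (k.factorial : ℂ) + u * ((Function.swap dslope (0 : ℂ))^[k + 1] Complex.exp) u := by
    intro k u
    rw [← hv k, Function.iterate_succ_apply']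
    exact (kz_div _ (hd k)).2 u
  refine ⟨_, hd 5, fun u => ?_⟩
  have e0 := hs 0 u
  have e1 := hs 1 u
  have e2 := hs 2 u
  have e3 := hs 3 u
  have e4 := hs 4 u
  rw [e1, e2, e3, e4] at e0
  simp only [Function.iterate_zero, id] at e0
  rw [e0]
  norm_num [Nat.factorial]
  ring

/-- Even Taylor estimate. -/
lemma kz_even (f : ℂ → ℂ) (hf : Differentiable ℂ f) (M ρ : ℝ) (hρ : 0 < ρ)
    (hM : ∀ z, ‖z‖ ≤ ρ → ‖f z‖ ≤ M) (z : ℂ) (h1 : ‖f z‖ ≤ M) (h2 : ‖f (-z)‖ ≤ M) :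
    ‖f z + f (-z) - 2 * f 0 - z ^ 2 * deriv (deriv f) 0‖ ≤ 6 * M * (‖z‖ / ρ) ^ 4 := by
  have hM0 : 0 ≤ M := (norm_nonneg _).trans h1
  have hdf : Differentiable ℂ (deriv f) := by
    rw [← differentiableOn_univ]
    exact hf.differentiableOn.deriv isOpen_univ
  set c := deriv (deriv f) 0 with hc
  have hcb : ‖c‖ ≤ 2 * M / ρ ^ 2 := by
    have := Complex.norm_iteratedDeriv_le_of_forall_mem_sphere_norm_le 2 hρ
      (f := f) (c := 0) hf.diffContOnCl (C := M) (fun w hw => hM w (by simpa using hw.le))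
    simpa [iteratedDeriv_succ, iteratedDeriv_zero] using this
  have hf0 : ‖f 0‖ ≤ M := hM 0 (by simpa using hρ.le)
  set h : ℂ → ℂ := fun w => f w + f (-w) - 2 * f 0 - w ^ 2 * c with hh
  have hb : ∀ w, ‖f w‖ ≤ M → ‖f (-w)‖ ≤ M → ‖h w‖ ≤ 4 * M + 2 * M * (‖w‖ / ρ) ^ 2 := by
    intro w a b
    calc ‖h w‖ ≤ ‖f w‖ + ‖f (-w)‖ + ‖2 * f 0‖ + ‖w ^ 2 * c‖ := by
          have t1 := norm_sub_le (f w + f (-w) - 2 * f 0) (w ^ 2 * c)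
          have t2 := norm_sub_le (f w + f (-w)) (2 * f 0)
          have t3 := norm_add_le (f w) (f (-w))
          simp only [hh]
          linarith
      _ ≤ M + M + 2 * M + ‖w‖ ^ 2 * (2 * M / ρ ^ 2) := by
          rw [norm_mul, norm_mul, norm_pow, Complex.norm_ofNat]
          gcongr
      _ = _ := by rw [div_pow]; ring
  have hdh : Differentiable ℂ h := by
    simp only [hh]; fun_prop
  obtain ⟨d1, e1⟩ := kz_div h hdh
  obtain ⟨d2, e2⟩ := kz_div _ d1
  obtain ⟨d3, e3⟩ := kz_div _ d2
  obtain ⟨d4, e4⟩ := kz_div _ d3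
  set k1 := dslope h 0
  set k2 := dslope k1 0
  set k3 := dslope k2 0
  set k4 := dslope k3 0
  have hder1 : ∀ w, HasDerivAt h (deriv f w - deriv f (-w) - 2 * w * c) w := by
    intro w
    have a := (hf w).hasDerivAt
    have b : HasDerivAt (fun w => f (-w)) (deriv f (-w) * (-1)) w :=
      HasDerivAt.comp w (hf (-w)).hasDerivAt (hasDerivAt_neg w)
    convert! ((a.add b).sub_const (2 * f 0)).sub (((hasDerivAt_id w).pow 2).mul_const c) using 1
    simp; ring
  have h00 : h 0 = 0 := by simp [hh]; ring
  have k10 : k1 0 = 0 := by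
    have : k1 0 = deriv h 0 := dslope_same _ _
    rw [this, (hder1 0).deriv]; simp
  have hk2 : ∀ w, h w = w ^ 2 * k2 w := by
    intro w; rw [e1, e2, h00, k10]; ring
  have heven : ∀ w, h (-w) = h w := by intro w; simp [hh]; ring
  have k20 : k2 0 = 0 := by
    have A : deriv h = fun w => deriv f w - deriv f (-w) - 2 * w * c := funext fun w => (hder1 w).deriv
    have B : deriv h = fun w => 2 * w * k2 w + w ^ 2 * deriv k2 w := by
      funext w
      have : h = fun w => w ^ 2 * k2 w := funext hk2
      rw [this]
      have := ((hasDerivAt_id w).pow 2).mul (d2 w).hasDerivAt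
      convert! this.deriv using 1
      simp
    have dk2 : Differentiable ℂ (deriv k2) := by
      rw [← differentiableOn_univ]
      exact d2.differentiableOn.deriv isOpen_univ
    have A' : HasDerivAt (deriv h) (c - c * (-1) - 2 * c) 0 := by
      rw [A]
      have a : HasDerivAt (deriv f) c 0 := (hdf 0).hasDerivAt
      have b : HasDerivAt (fun w => deriv f (-w)) (c * (-1)) 0 :=
        by
        have a' : HasDerivAt (deriv f) c (-(0:ℂ)) := by simpa using a
        exact HasDerivAt.comp (0:ℂ) a' (hasDerivAt_neg (0:ℂ))
      convert! (a.sub b).sub (((hasDerivAt_id (0:ℂ)).const_mul 2).mul_const c) using 1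
      simp
    have B' : HasDerivAt (deriv h) (2 * k2 0) 0 := by
      rw [B]
      convert! (((hasDerivAt_id (0:ℂ)).const_mul 2).mul (d2 0).hasDerivAt).add
        (((hasDerivAt_id (0:ℂ)).pow 2).mul (dk2 0).hasDerivAt) using 1
      simp
    have := A'.unique B'
    linear_combination -this / 2
  have k3e : ∀ w, w ≠ 0 → k3 (-w) = - k3 w := by
    intro w hw
    have := heven w
    rw [hk2, hk2, e3, e3 w, k20] at this
    have h3 : w ^ 3 ≠ 0 := pow_ne_zero _ hw
    apply mul_left_cancel₀ h3
    linear_combination -this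
  have k30 : k3 0 = 0 := by
    have a : Tendsto (fun w => k3 (-w) + k3 w) (nhdsWithin 0 {0}ᶜ) (nhds (k3 (-0) + k3 0)) := by
      apply Tendsto.mono_left _ nhdsWithin_le_nhds
      have : Continuous (fun w => k3 (-w) + k3 w) := by
        have := d3.continuous
        fun_prop
      exact this.tendsto 0
    have b : Tendsto (fun w => k3 (-w) + k3 w) (nhdsWithin 0 {0}ᶜ) (nhds 0) := by
      refine tendsto_const_nhds.congr' ?_
      filter_upwards [self_mem_nhdsWithin] with w hw
      rw [k3e w hw]; ring
    have := tendsto_nhds_unique a b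
    rw [neg_zero] at this
    linear_combination this / 2
  have hk4 : ∀ w, h w = w ^ 4 * k4 w := by
    intro w; rw [hk2, e3, e4, k20, k30]; ring
  change ‖h z‖ ≤ _
  rcases le_total ‖z‖ ρ with hz | hz
  · have hk : ‖k4 z‖ ≤ 6 * M / ρ ^ 4 := by
      refine Complex.norm_le_of_forall_mem_frontier_norm_le (U := Metric.ball 0 ρ)
        Metric.isBounded_ball d4.diffContOnCl ?_ ?_
      · intro w hw
        rw [frontier_ball _ hρ.ne', mem_sphere_zero_iff_norm] at hw
        have := hb w (hM w hw.le) (hM _ (by rw [norm_neg]; exact hw.le))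
        rw [hk4, norm_mul, norm_pow, hw, div_self hρ.ne'] at this
        rw [le_div_iff₀ (by positivity)]
        linarith
      · rw [closure_ball _ hρ.ne']; simpa using hz
    rw [hk4, norm_mul, norm_pow]
    calc _ ≤ ‖z‖ ^ 4 * (6 * M / ρ ^ 4) := by gcongr
      _ = _ := by rw [div_pow]; ring
  · refine (hb z h1 h2).trans ?_
    have hr : 1 ≤ ‖z‖ / ρ := by rwa [le_div_iff₀ hρ, one_mul]
    have r1 : (‖z‖ / ρ) ^ 2 ≤ (‖z‖ / ρ) ^ 4 := pow_le_pow_right₀ hr (by norm_num)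
    have r2 : 1 ≤ (‖z‖ / ρ) ^ 4 := one_le_pow₀ hr
    nlinarith

lemma kz_gint (b : ℝ) (hb : 0 < b) (n : ℕ) : Integrable fun s : ℝ => s ^ n * Real.exp (-b * s ^ 2) := by
  have := integrable_rpow_mul_exp_neg_mul_sq hb (s := n) (by linarith [n.cast_nonneg (α := ℝ)])
  simpa using this

lemma kz_gmom (b : ℝ) (hb : 0 < b) (n : ℕ) :
    ∫ s : ℝ, s ^ (n + 2) * Real.exp (-b * s ^ 2) =
      (n + 1) / (2 * b) * ∫ s : ℝ, s ^ n * Real.exp (-b * s ^ 2) := by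
  have hi := fun n => kz_gint b hb n
  have key : ∫ s : ℝ, ((n + 1) * (s ^ n * Real.exp (-b * s ^ 2))
      - 2 * b * (s ^ (n + 2) * Real.exp (-b * s ^ 2))) = 0 := by
    refine integral_eq_zero_of_hasDerivAt_of_integrable
      (f := fun s : ℝ => s ^ (n + 1) * Real.exp (-b * s ^ 2)) ?_ ?_ (hi _)
    · intro s
      have h1 : HasDerivAt (fun s : ℝ => -b * s ^ 2) (-b * (2 * s)) s := by
        simpa using ((hasDerivAt_id s).pow 2).const_mul (-b)
      convert! ((hasDerivAt_id s).pow (n + 1)).mul h1.exp using 1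
      simp; ring
    · exact ((hi n).const_mul _).sub ((hi (n + 2)).const_mul _)
  rw [integral_sub ((hi n).const_mul _) ((hi (n + 2)).const_mul _), integral_const_mul,
    integral_const_mul] at key
  rw [div_mul_eq_mul_div, eq_div_iff (by positivity)]
  linarith

/-- The lower bound for the phase on the real line. -/
lemma kz_phase (p : ℝ) (hp : 0 < p) (ε s : ℝ) (hε : 0 < ε) (hε1 : ε ≤ 1) :
    (|s| - 1) / 4 ≤ ((Real.exp (p * (ε * s)) - 1) / p + Real.exp (-(ε * s)) - 1) / ε ^ 2 := by
  set u := ε * s with hu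
  have h1 : u ≤ (Real.exp (p * u) - 1) / p := by
    rw [le_div_iff₀ hp]
    linarith [Real.add_one_le_exp (p * u)]
  have hs : s = u / ε := by rw [hu]; field_simp
  have hq : |s| - 1 ≤ s ^ 2 := by
    rw [← sq_abs]; nlinarith [sq_nonneg (|s| - 1), abs_nonneg s]
  rw [le_div_iff₀ (by positivity)]
  rcases le_total u 2 with h | h
  · have : u ^ 2 / 4 ≤ u + Real.exp (-u) - 1 := by
      have h3 := Real.add_one_le_exp (-u / 2)
      have h4 : Real.exp (-u) = Real.exp (-u / 2) ^ 2 := by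
        rw [← Real.exp_nat_mul]; congr 1; push_cast; ring
      rw [h4]
      nlinarith
    have h5 : (|s| - 1) / 4 * ε ^ 2 ≤ s ^ 2 / 4 * ε ^ 2 := by gcongr
    have h6 : s ^ 2 / 4 * ε ^ 2 = u ^ 2 / 4 := by rw [hu]; ring
    linarith
  · have hs0 : 0 ≤ s := by rw [hs]; positivity
    rw [abs_of_nonneg hs0]
    have h7 : s * ε ^ 2 ≤ u := by rw [hu]; nlinarith [mul_nonneg hs0 hε.le]
    have := Real.exp_pos (-u)
    nlinarith [sq_nonneg ε]

lemma kz_weight : ∃ K : ℝ, 0 < K ∧ ∀ s : ℝ,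
    (1 + |s|) ^ 4 * Real.exp (-|s| / 8) ≤ K * (1 + s ^ 2)⁻¹ := by
  refine ⟨Real.exp (1 / 8) * (8 ^ 6 * 720), by positivity, fun s => ?_⟩
  rw [← div_eq_mul_inv, le_div_iff₀ (by positivity)]
  have h1 := Real.pow_div_factorial_le_exp ((1 + |s|) / 8) (by positivity) 6
  have h2 : Real.exp (-|s| / 8) = Real.exp (1 / 8) * (Real.exp ((1 + |s|) / 8))⁻¹ := by
    rw [← Real.exp_neg, ← Real.exp_add]; congr 1; ring
  have h3 : 1 + s ^ 2 ≤ (1 + |s|) ^ 2 := by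
    rw [← sq_abs]; nlinarith [abs_nonneg s]
  have h4 : (1 + |s|) ^ 6 ≤ 8 ^ 6 * 720 * Real.exp ((1 + |s|) / 8) := by
    rw [div_pow] at h1
    norm_num [Nat.factorial] at h1 ⊢
    linarith
  have h5 := Real.exp_pos ((1 + |s|) / 8)
  rw [h2]
  calc _ ≤ (1 + |s|) ^ 4 * (Real.exp (1 / 8) * (Real.exp ((1 + |s|) / 8))⁻¹) * (1 + |s|) ^ 2 := by
        gcongr
    _ = Real.exp (1 / 8) * ((1 + |s|) ^ 6 * (Real.exp ((1 + |s|) / 8))⁻¹) := by ring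
    _ ≤ Real.exp (1 / 8) * (8 ^ 6 * 720) := by
        refine mul_le_mul_of_nonneg_left ?_ (Real.exp_pos _).le
        rwa [← div_eq_mul_inv, div_le_iff₀ h5]

/-- The phase divided by the square. -/
lemma kz_q (p : ℝ) (hp : 0 < p) : ∃ q : ℂ → ℂ, Differentiable ℂ q ∧
    (∀ u : ℂ, (Complex.exp (p * u) - 1) / p + Complex.exp (-u) - 1 = u ^ 2 * q u) ∧
    q 0 = (p + 1) / 2 ∧ deriv q 0 = (p ^ 2 - 1) / 6 ∧ deriv (deriv q) 0 = (p ^ 3 + 1) / 12 := by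
  obtain ⟨E, hE, he⟩ := kz_exp
  have hp' : (p : ℂ) ≠ 0 := by exact_mod_cast hp.ne'
  set r : ℂ → ℂ := fun u => p ^ 4 * E (p * u) - E (-u) with hr
  have hrd : Differentiable ℂ r := by simp only [hr]; fun_prop
  have hrd' : Differentiable ℂ (deriv r) := by
    rw [← differentiableOn_univ]
    exact hrd.differentiableOn.deriv isOpen_univ
  set q : ℂ → ℂ := fun u => (p + 1) / 2 + (p ^ 2 - 1) / 6 * u + (p ^ 3 + 1) / 24 * u ^ 2 + u ^ 3 * r u
    with hq
  have d1 : ∀ u, HasDerivAt q ((p ^ 2 - 1) / 6 + (p ^ 3 + 1) / 24 * (2 * u)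
      + (3 * u ^ 2 * r u + u ^ 3 * deriv r u)) u := by
    intro u
    have i := hasDerivAt_id u
    convert! (((i.const_mul (((p:ℂ) ^ 2 - 1) / 6)).const_add (((p:ℂ) + 1) / 2)).add
      ((i.pow 2).const_mul (((p:ℂ) ^ 3 + 1) / 24))).add ((i.pow 3).mul (hrd u).hasDerivAt) using 1
    simp
  refine ⟨q, fun u => (d1 u).differentiableAt, fun u => ?_, by simp [hq], ?_, ?_⟩
  · rw [he, he (-u)]
    simp only [hq, hr]
    field_simp
    ring
  · rw [(d1 0).deriv]; simp
  · have A : deriv q = fun u => (p ^ 2 - 1) / 6 + (p ^ 3 + 1) / 24 * (2 * u)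
      + (3 * u ^ 2 * r u + u ^ 3 * deriv r u) := funext fun u => (d1 u).deriv
    rw [A]
    have i := hasDerivAt_id (0:ℂ)
    have := ((((i.const_mul (2:ℂ)).const_mul (((p:ℂ) ^ 3 + 1) / 24)).const_add (((p:ℂ) ^ 2 - 1) / 6)).add
      ((((i.pow 2).const_mul (3:ℂ)).mul (hrd 0).hasDerivAt).add
        ((i.pow 3).mul (hrd' 0).hasDerivAt))).deriv
    convert! this using 1
    simp; ring

/-- Second derivative of the integrand at zero. -/
lemma kz_d2 (q : ℂ → ℂ) (hq : Differentiable ℂ q) (ν s : ℂ) :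
    deriv (deriv (fun z => Complex.exp (ν * (z * s) - s ^ 2 * q (z * s)))) 0 =
      ((ν * s - s ^ 3 * deriv q 0) ^ 2 - s ^ 4 * deriv (deriv q) 0) * Complex.exp (-(s ^ 2 * q 0)) := by
  have hq' : Differentiable ℂ (deriv q) := by
    rw [← differentiableOn_univ]
    exact hq.differentiableOn.deriv isOpen_univ
  have m : ∀ z, HasDerivAt (fun z : ℂ => z * s) s z := fun z => by
    simpa using (hasDerivAt_id z).mul_const s
  have d1 : ∀ z, HasDerivAt (fun z => Complex.exp (ν * (z * s) - s ^ 2 * q (z * s)))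
      (Complex.exp (ν * (z * s) - s ^ 2 * q (z * s)) * (ν * s - s ^ 2 * (deriv q (z * s) * s))) z := by
    intro z
    have c : HasDerivAt (fun z => q (z * s)) (deriv q (z * s) * s) z :=
      HasDerivAt.comp z (hq (z * s)).hasDerivAt (m z)
    exact (((m z).const_mul ν).sub (c.const_mul (s ^ 2))).cexp
  have A := funext fun z => (d1 z).deriv
  have c : HasDerivAt (fun z => deriv q (z * s)) (deriv (deriv q) (0 * s) * s) 0 :=
    HasDerivAt.comp (h₂ := deriv q) (0:ℂ) (hq' (0 * s)).hasDerivAt (m 0)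
  have B := (d1 0).mul (((c.mul_const s).const_mul (s ^ 2)).const_sub (ν * s))
  rw [A]
  refine (HasDerivAt.deriv B).trans ?_
  simp only [zero_mul, mul_zero, zero_sub]
  ring

/-- The Gaussian integral of the second coefficient. -/
lemma kz_coef (b : ℝ) (hb : 0 < b) (ν c3 c4 : ℂ) :
    Integrable (fun s : ℝ => ((ν * s - s ^ 3 * c3) ^ 2 - s ^ 4 * c4) * Complex.exp (-((s:ℂ) ^ 2 * b))) ∧
    ∫ s : ℝ, ((ν * s - s ^ 3 * c3) ^ 2 - s ^ 4 * c4) * Complex.exp (-((s:ℂ) ^ 2 * b)) =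
      Real.sqrt (Real.pi / b) * (ν ^ 2 / (2 * b) - 2 * ν * c3 * (3 / (2 * b) ^ 2)
        + c3 ^ 2 * (15 / (2 * b) ^ 3) - c4 * (3 / (2 * b) ^ 2)) := by
  have hbc : (b : ℂ) ≠ 0 := by exact_mod_cast hb.ne'
  have m0 : ∫ s : ℝ, s ^ 0 * Real.exp (-b * s ^ 2) = Real.sqrt (Real.pi / b) := by
    simpa using integral_gaussian b
  have m2 := kz_gmom b hb 0
  have m4 := kz_gmom b hb 2
  have m6 := kz_gmom b hb 4
  rw [m0] at m2
  norm_num only at m2 m4 m6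
  rw [m2] at m4
  rw [m4] at m6
  have hi : ∀ n, Integrable (fun s : ℝ => ((s ^ n * Real.exp (-b * s ^ 2) : ℝ) : ℂ)) :=
    fun n => (kz_gint b hb n).ofReal
  have e : (fun s : ℝ => ((ν * s - s ^ 3 * c3) ^ 2 - s ^ 4 * c4) * Complex.exp (-((s:ℂ) ^ 2 * b))) =
      fun s : ℝ => ν ^ 2 * ((s ^ 2 * Real.exp (-b * s ^ 2) : ℝ) : ℂ)
        - (2 * ν * c3 + c4) * ((s ^ 4 * Real.exp (-b * s ^ 2) : ℝ) : ℂ)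
        + c3 ^ 2 * ((s ^ 6 * Real.exp (-b * s ^ 2) : ℝ) : ℂ) := by
    funext s
    have : Complex.exp (-((s:ℂ) ^ 2 * b)) = ((Real.exp (-b * s ^ 2) : ℝ) : ℂ) := by
      push_cast; congr 1; ring
    rw [this]; push_cast; ring
  rw [e]
  have i2 := (hi 2).const_mul (ν ^ 2)
  have i4 := (hi 4).const_mul (2 * ν * c3 + c4)
  have i6 := (hi 6).const_mul (c3 ^ 2)
  refine ⟨(i2.sub i4).add i6, ?_⟩
  refine (integral_add (i2.sub i4) i6).trans ?_
  rw [integral_sub' i2 i4, integral_const_mul, integral_const_mul,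
    integral_const_mul, integral_complex_ofReal, integral_complex_ofReal, integral_complex_ofReal,
    m2, m4, m6]
  push_cast
  field_simp
  ring

/-- The core Laplace estimate. -/
lemma kz_core (p : ℝ) (hp : 0 < p) (ν : ℂ) : ∃ C ε₀ : ℝ, 0 < ε₀ ∧ ∀ ε : ℝ, 0 < ε → ε ≤ ε₀ →
    ‖(∫ s : ℝ, Complex.exp (ν * (ε * s) - ((((Real.exp (p * (ε * s)) - 1) / p
        + Real.exp (-(ε * s)) - 1) / ε ^ 2 : ℝ) : ℂ)))
      - Real.sqrt (2 * Real.pi / (p + 1)) * (1 +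
        (2 + 12 * ν ^ 2 - 12 * ν * ((p : ℂ) - 1) - 7 * p + 2 * (p : ℂ) ^ 2)
          / (24 * ((p : ℂ) + 1)) * ε ^ 2)‖ ≤ C * ε ^ 4 := by
  obtain ⟨q, hq, hφ, q0, q1, q2⟩ := kz_q p hp
  obtain ⟨K, hK, hw⟩ := kz_weight
  have hpc : (p : ℂ) + 1 ≠ 0 := by exact_mod_cast (by positivity : p + 1 ≠ 0)
  have hp' : (p : ℂ) ≠ 0 := by exact_mod_cast hp.ne'
  obtain ⟨δ, hδ, hδ1, hqδ⟩ : ∃ δ : ℝ, 0 < δ ∧ δ ≤ 1 ∧ ∀ u : ℂ, ‖u‖ ≤ δ → 1 / 4 ≤ (q u).re := by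
    have hc : Continuous fun u => (q u).re := Complex.continuous_re.comp hq.continuous
    have h0 : 1 / 4 < (q 0).re := by
      have : q 0 = (((p + 1) / 2 : ℝ) : ℂ) := by rw [q0]; push_cast; rfl
      rw [this, Complex.ofReal_re]; linarith
    have := (hc.tendsto 0).eventually (lt_mem_nhds h0)
    obtain ⟨r, hr, hr'⟩ := Metric.eventually_nhds_iff.1 this
    refine ⟨min (r / 2) 1, by positivity, min_le_right _ _, fun u hu => ?_⟩
    refine (hr' ?_).le
    rw [dist_zero_right]
    exact lt_of_le_of_lt (hu.trans (min_le_left _ _)) (by linarith)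
  set G : ℂ → ℝ → ℂ := fun z s => Complex.exp (ν * (z * s) - (s:ℂ) ^ 2 * q (z * s)) with hG
  set M : ℝ → ℝ := fun s => Real.exp (‖ν‖ + 1 / 4) * Real.exp (-|s| / 8) with hM
  have b1 : ∀ s z, ‖z‖ ≤ δ / (1 + |s|) → ‖G z s‖ ≤ M s := by
    intro s z hz
    rw [le_div_iff₀ (by positivity)] at hz
    have hzs : ‖z * s‖ ≤ δ := by
      rw [norm_mul, Complex.norm_real, Real.norm_eq_abs]
      nlinarith [norm_nonneg z, abs_nonneg s]
    have h1 := hqδ _ hzs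
    simp only [hG, hM]
    rw [Complex.norm_exp, ← Real.exp_add, Real.exp_le_exp, Complex.sub_re,
      ← Complex.ofReal_pow, Complex.re_ofReal_mul]
    have h2 : (ν * (z * s)).re ≤ ‖ν‖ := by
      refine (Complex.re_le_norm _).trans ?_
      rw [norm_mul]
      exact mul_le_of_le_one_right (norm_nonneg _) (hzs.trans hδ1)
    have h3 : |s| - 1 ≤ s ^ 2 := by
      rw [← sq_abs]; nlinarith [sq_nonneg (|s| - 1), abs_nonneg s]
    have h4 : s ^ 2 * (1 / 4) ≤ s ^ 2 * (q (z * s)).re := by gcongr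
    linarith [abs_nonneg s]
  have hreal : ∀ ε s : ℝ, 0 < ε → G ε s = Complex.exp (ν * (ε * s) - ((((Real.exp (p * (ε * s)) - 1) / p
        + Real.exp (-(ε * s)) - 1) / ε ^ 2 : ℝ) : ℂ)) := by
    intro ε s hε
    have hεc : (ε : ℂ) ≠ 0 := by exact_mod_cast hε.ne'
    simp only [hG]
    congr 2
    push_cast
    rw [hφ]
    field_simp
  have hε0 : 0 < 1 / (8 * ‖ν‖ + 1) := by positivity
  have b2 : ∀ ε s : ℝ, 0 < ε → ε ≤ 1 / (8 * ‖ν‖ + 1) → ‖G ε s‖ ≤ M s := by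
    intro ε s hε hε'
    rw [le_div_iff₀ (by positivity)] at hε'
    have hε1 : ε ≤ 1 := by nlinarith [norm_nonneg ν]
    rw [hreal ε s hε]
    simp only [hM]
    rw [Complex.norm_exp, ← Real.exp_add, Real.exp_le_exp, Complex.sub_re,
      Complex.ofReal_re]
    have h2 : (ν * (ε * s)).re ≤ |s| / 8 := by
      refine (Complex.re_le_norm _).trans ?_
      rw [norm_mul, norm_mul, Complex.norm_real, Complex.norm_real, Real.norm_eq_abs,
        Real.norm_eq_abs, abs_of_pos hε]
      nlinarith [abs_nonneg s, norm_nonneg ν]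
    have h3 := kz_phase p hp ε s hε hε1
    linarith [norm_nonneg ν]
  have hMw : ∀ s, M s ≤ Real.exp (‖ν‖ + 1 / 4) * K * (1 + s ^ 2)⁻¹ := by
    intro s
    rw [hM, mul_assoc]
    refine mul_le_mul_of_nonneg_left (le_trans ?_ (hw s)) (Real.exp_pos _).le
    exact le_mul_of_one_le_left (Real.exp_pos _).le (one_le_pow₀ (by linarith [abs_nonneg s]))
  have hwi : Integrable (fun s : ℝ => (1 + s ^ 2)⁻¹) := integrable_inv_one_add_sq
  have hGc : ∀ z, Continuous (G z) := by
    intro z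
    have := hq.continuous
    simp only [hG]
    fun_prop
  have hGi : ∀ z, (∀ s, ‖G z s‖ ≤ M s) → Integrable (G z) := by
    intro z hz
    refine (hwi.const_mul (Real.exp (‖ν‖ + 1 / 4) * K)).mono' (hGc z).aestronglyMeasurable ?_
    exact Eventually.of_forall fun s => (hz s).trans (hMw s)
  have hneg : ∀ z s, G (-z) s = G z (-s) := by
    intro z s; simp [hG]
  have hMn : ∀ s, M (-s) = M s := by intro s; simp [hM]
  set b : ℝ := (p + 1) / 2 with hb
  have hbp : 0 < b := by positivity
  have hbc : q 0 = b := by rw [q0, hb]; push_cast; rfl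
  obtain ⟨i2, v2⟩ := kz_coef b hbp ν (deriv q 0) (deriv (deriv q) 0)
  have hD : ∀ s : ℝ, deriv (deriv (fun z => G z s)) 0 = ((ν * s - s ^ 3 * deriv q 0) ^ 2
      - s ^ 4 * deriv (deriv q) 0) * Complex.exp (-((s:ℂ) ^ 2 * b)) := by
    intro s
    rw [← hbc]
    exact kz_d2 q hq ν s
  have hG0 : ∀ s : ℝ, G 0 s = ((Real.exp (-b * s ^ 2) : ℝ) : ℂ) := by
    intro s
    simp only [hG, zero_mul, mul_zero, zero_sub, hbc]
    push_cast; congr 1; ring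
  have v0 : ∫ s : ℝ, G 0 s = Real.sqrt (Real.pi / b) := by
    simp_rw [hG0]
    rw [integral_complex_ofReal, integral_gaussian]
  have i0 : Integrable (G 0) := hGi 0 fun s => b1 s 0 (by rw [norm_zero]; positivity)
  refine ⟨(6 * Real.exp (‖ν‖ + 1 / 4) / δ ^ 4 * K * ∫ s : ℝ, (1 + s ^ 2)⁻¹) / 2,
    1 / (8 * ‖ν‖ + 1), hε0, fun ε hε hε' => ?_⟩
  simp_rw [← hreal ε _ hε]
  have iε : Integrable (G ε) := hGi ε fun s => b2 ε s hε hε'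
  have iε' : Integrable (fun s => G (-ε) s) := by
    simp_rw [hneg]; exact iε.comp_neg
  have vn : ∫ s : ℝ, G (-ε) s = ∫ s : ℝ, G ε s := by
    simp_rw [hneg]
    exact integral_neg_eq_self (G ε) volume
  have hpt : ∀ s : ℝ, ‖G ε s + G (-ε) s - 2 * G 0 s - (ε:ℂ) ^ 2 * (((ν * s - s ^ 3 * deriv q 0) ^ 2
      - s ^ 4 * deriv (deriv q) 0) * Complex.exp (-((s:ℂ) ^ 2 * b)))‖ ≤
      6 * Real.exp (‖ν‖ + 1 / 4) / δ ^ 4 * K * ε ^ 4 * (1 + s ^ 2)⁻¹ := by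
    intro s
    rw [← hD]
    have hd : Differentiable ℂ (fun z => G z s) := by
      simp only [hG]; fun_prop
    refine (kz_even (fun z => G z s) hd (M s) (δ / (1 + |s|)) (by positivity) (b1 s) ε
      (b2 ε s hε hε') ?_).trans ?_
    · rw [hneg, ← hMn]; exact b2 ε (-s) hε hε'
    · rw [Complex.norm_real, Real.norm_eq_abs, abs_of_pos hε, hM]
      calc _ = 6 * Real.exp (‖ν‖ + 1 / 4) / δ ^ 4 * ε ^ 4 * ((1 + |s|) ^ 4 * Real.exp (-|s| / 8)) := by
            field_simp
        _ ≤ 6 * Real.exp (‖ν‖ + 1 / 4) / δ ^ 4 * ε ^ 4 * (K * (1 + s ^ 2)⁻¹) := by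
            exact mul_le_mul_of_nonneg_left (hw s) (by positivity)
        _ = _ := by ring
  have hfin := norm_integral_le_of_norm_le (hwi.const_mul _) (Eventually.of_forall hpt)
  have hsplit := integral_sub ((iε.add iε').sub (i0.const_mul 2)) (i2.const_mul ((ε:ℂ) ^ 2))
  rw [integral_sub' (iε.add iε') (i0.const_mul 2), integral_add' iε iε', vn] at hsplit
  simp only [Pi.add_apply, Pi.sub_apply] at hsplit
  rw [hsplit, integral_const_mul, integral_const_mul, integral_const_mul, v0, v2, q1, q2] at hfin
  have hsq : Real.pi / b = 2 * Real.pi / (p + 1) := by rw [hb]; field_simp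
  rw [hsq] at hfin
  set I := ∫ s : ℝ, G ε s
  have hid : I - Real.sqrt (2 * Real.pi / (p + 1)) * (1 +
        (2 + 12 * ν ^ 2 - 12 * ν * ((p : ℂ) - 1) - 7 * p + 2 * (p : ℂ) ^ 2)
          / (24 * ((p : ℂ) + 1)) * ε ^ 2) = (1 / 2 : ℂ) * (I + I - 2 * Real.sqrt (2 * Real.pi / (p + 1)) -
      (ε:ℂ) ^ 2 * (Real.sqrt (2 * Real.pi / (p + 1)) * (ν ^ 2 / (2 * b) - 2 * ν * ((p ^ 2 - 1) / 6) * (3 / (2 * b) ^ 2)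
        + ((p ^ 2 - 1) / 6) ^ 2 * (15 / (2 * b) ^ 3) - ((p ^ 3 + 1) / 12) * (3 / (2 * b) ^ 2)))) := by
    have h2b : (2 * b : ℂ) = p + 1 := by rw [hb]; push_cast; ring
    rw [h2b]
    field_simp
    ring
  rw [hid, norm_mul]
  have : ‖(1 / 2 : ℂ)‖ = 1 / 2 := by norm_num
  rw [this]
  linarith

/-- Change of variables. -/
lemma kz_cov (p : ℝ) (hp : 0 < p) (ν : ℂ) (T ε : ℝ) (hT : 0 < T) (hε : 0 < ε)
    (hTε : p * T ^ p = 1 / ε ^ 2) :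
    (∫ t in Ioi (0 : ℝ), (t : ℂ) ^ (ν - 1)
          * Complex.exp (-((t ^ p : ℝ) : ℂ) - ((p * T ^ (p + 1) / t : ℝ) : ℂ))) =
      ε * (T : ℂ) ^ ν * Complex.exp (-(((p + 1) * T ^ p : ℝ) : ℂ)) *
      ∫ s : ℝ, Complex.exp (ν * (ε * s) - ((((Real.exp (p * (ε * s)) - 1) / p
        + Real.exp (-(ε * s)) - 1) / ε ^ 2 : ℝ) : ℂ)) := by
  have himg : (fun s : ℝ => T * Real.exp (ε * s)) '' univ = Ioi 0 := by
    ext t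
    simp only [mem_image, mem_univ, true_and, mem_Ioi]
    constructor
    · rintro ⟨s, rfl⟩; positivity
    · intro ht
      refine ⟨Real.log (t / T) / ε, ?_⟩
      rw [mul_div_cancel₀ _ hε.ne', Real.exp_log (by positivity)]
      field_simp
  have hinj : InjOn (fun s : ℝ => T * Real.exp (ε * s)) univ := by
    intro a _ b _ h
    have := mul_left_cancel₀ hT.ne' h
    exact mul_left_cancel₀ hε.ne' (Real.exp_injective this)
  have hder : ∀ s ∈ (univ : Set ℝ), HasDerivWithinAt (fun s : ℝ => T * Real.exp (ε * s))
      (T * (Real.exp (ε * s) * ε)) univ s := by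
    intro s _
    have : HasDerivAt (fun s : ℝ => ε * s) ε s := by simpa using (hasDerivAt_id s).const_mul ε
    exact (this.exp.const_mul T).hasDerivWithinAt
  rw [← himg, integral_image_eq_integral_abs_deriv_smul MeasurableSet.univ hder hinj,
    setIntegral_univ, ← integral_const_mul]
  congr 1
  funext s
  have hpos : 0 < T * Real.exp (ε * s) := by positivity
  have hTc : (T : ℂ) ≠ 0 := by exact_mod_cast hT.ne'
  have hec : Complex.exp (ε * s) ≠ 0 := Complex.exp_ne_zero _
  rw [abs_of_pos (by positivity), Complex.real_smul]
  have h1 : (((T * Real.exp (ε * s) : ℝ)) : ℂ) ^ (ν - 1) =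
      (T : ℂ) ^ ν * Complex.exp (ν * (ε * s)) / (T * Complex.exp (ε * s)) := by
    rw [Complex.cpow_sub _ _ (by exact_mod_cast hpos.ne'), Complex.cpow_one, Complex.ofReal_mul,
      Complex.mul_cpow_ofReal_nonneg hT.le (Real.exp_pos _).le]
    congr 2
    · rw [Complex.cpow_def_of_ne_zero (by exact_mod_cast (Real.exp_pos _).ne'),
        ← Complex.ofReal_log (Real.exp_pos _).le, Real.log_exp]
      push_cast; congr 1; ring
    · push_cast; rfl
  have h2 : (T * Real.exp (ε * s)) ^ p = T ^ p * Real.exp (p * (ε * s)) := by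
    rw [Real.mul_rpow hT.le (Real.exp_pos _).le, ← Real.exp_mul, mul_comm (ε * s)]
  have h3 : p * T ^ (p + 1) / (T * Real.exp (ε * s)) = p * T ^ p * Real.exp (-(ε * s)) := by
    rw [Real.rpow_add_one hT.ne', Real.exp_neg]
    field_simp
  have h4 : ((Real.exp (p * (ε * s)) - 1) / p + Real.exp (-(ε * s)) - 1) / ε ^ 2 =
      T ^ p * Real.exp (p * (ε * s)) + p * T ^ p * Real.exp (-(ε * s)) - (p + 1) * T ^ p := by
    rw [div_eq_mul_one_div _ (ε ^ 2), ← hTε]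
    field_simp
    ring
  rw [h1, h2, h3, h4]
  have h5 : Complex.exp (-((T ^ p * Real.exp (p * (ε * s)) : ℝ) : ℂ) - ((p * T ^ p * Real.exp (-(ε * s)) : ℝ) : ℂ))
      * Complex.exp (ν * (ε * s)) = Complex.exp (-(((p + 1) * T ^ p : ℝ) : ℂ)) * Complex.exp (ν * (ε * s) -
        ((T ^ p * Real.exp (p * (ε * s)) + p * T ^ p * Real.exp (-(ε * s)) - (p + 1) * T ^ p : ℝ) : ℂ)) := by
    rw [← Complex.exp_add, ← Complex.exp_add]
    congr 1
    push_cast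
    ring
  have h6 : ((T * (Real.exp (ε * s) * ε) : ℝ) : ℂ) = T * Complex.exp (ε * s) * ε := by
    push_cast; ring
  rw [h6, mul_assoc (_ * _ : ℂ) (Complex.exp (-_)), ← h5]
  field_simp



/-- Two-term asymptotic expansion of Krätzel's integral for `p > 0` as `x → +∞`:
with `X = p^(1/(p+1)) x^(p/(p+1))` and
`B₁ = (2 + 12ν² - 12ν(p-1) - 7p + 2p²)/(24(p+1))`,
`F_{p,ν}(x) = L(x) (1 + B₁/X + O(X^{-2}))`, where
`L(x) = √(2π/((p+1)X)) (x/p)^(ν/(p+1)) exp(-(p+1)(x/p)^(p/(p+1)))`. -/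
theorem kratzel_two_term_asymptotics (p : ℝ) (hp : 0 < p) (ν : ℂ)
    (X : ℝ → ℝ) (hX : ∀ x : ℝ, X x = p ^ (1 / (p + 1)) * x ^ (p / (p + 1)))
    (B₁ : ℂ)
    (hB₁ : B₁ = (2 + 12 * ν ^ 2 - 12 * ν * ((p : ℂ) - 1) - 7 * p + 2 * (p : ℂ) ^ 2)
      / (24 * ((p : ℂ) + 1)))
    (L : ℝ → ℂ)
    (hL : ∀ x : ℝ, L x = (Real.sqrt (2 * Real.pi / ((p + 1) * X x)) : ℂ)
      * ((x / p : ℝ) : ℂ) ^ (ν / (p + 1 : ℝ))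
      * Complex.exp (-(((p + 1) * (x / p) ^ (p / (p + 1)) : ℝ) : ℂ))) :
    (fun x : ℝ =>
      (∫ t in Ioi (0 : ℝ), (t : ℂ) ^ (ν - 1)
          * Complex.exp (-((t ^ p : ℝ) : ℂ) - ((x / t : ℝ) : ℂ))) / L x
        - (1 + B₁ / (X x : ℂ)))
      =O[atTop] (fun x : ℝ => (X x) ^ (-2 : ℝ)) := by
  obtain ⟨C, ε₀, hε₀, hcore⟩ := kz_core p hp ν
  rw [← hB₁] at hcore
  have hp1 : 0 < p + 1 := by positivity
  set S : ℝ := Real.sqrt (2 * Real.pi / (p + 1)) with hS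
  have hSpos : 0 < S := by rw [hS]; positivity
  have hSc : (S : ℂ) ≠ 0 := by exact_mod_cast hSpos.ne'
  have hXt : Tendsto X atTop atTop := by
    have : X = fun x => p ^ (1 / (p + 1)) * x ^ (p / (p + 1)) := funext hX
    rw [this]
    exact (tendsto_rpow_atTop (by positivity)).const_mul_atTop (by positivity)
  refine IsBigO.of_bound (C / S) ?_
  filter_upwards [eventually_gt_atTop 0, hXt.eventually_gt_atTop 0,
    hXt.eventually_ge_atTop ((ε₀ ^ 2)⁻¹)] with x hx hXpos hXge
  set ε : ℝ := (Real.sqrt (X x))⁻¹ with hεdef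
  have hε : 0 < ε := by rw [hεdef]; positivity
  have hε2 : ε ^ 2 = (X x)⁻¹ := by rw [hεdef, inv_pow, Real.sq_sqrt hXpos.le]
  have hεle : ε ≤ ε₀ := by
    refine (sq_le_sq₀ hε.le hε₀.le).1 ?_
    rw [hε2]
    exact inv_le_of_inv_le₀ (by positivity) hXge
  set T : ℝ := (x / p) ^ (1 / (p + 1)) with hT
  have hTpos : 0 < T := by rw [hT]; positivity
  have hTp : T ^ p = (x / p) ^ (p / (p + 1)) := by
    rw [hT, ← Real.rpow_mul (by positivity)]; congr 1; ring
  have hTp1 : p * T ^ (p + 1) = x := by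
    rw [hT, ← Real.rpow_mul (by positivity), one_div_mul_cancel hp1.ne', Real.rpow_one]
    field_simp
  have hXT : X x = p * T ^ p := by
    rw [hTp, hX, Real.div_rpow hx.le hp.le]
    have : p ^ (1 / (p + 1)) * p ^ (p / (p + 1)) = p := by
      rw [← Real.rpow_add hp, ← add_div, add_comm 1 p, div_self hp1.ne', Real.rpow_one]
    have h0 : p ^ (p / (p + 1)) ≠ 0 := (Real.rpow_pos_of_pos hp _).ne'
    rw [mul_div_assoc', eq_div_iff h0, mul_right_comm, this]
  have hTε : p * T ^ p = 1 / ε ^ 2 := by rw [hε2, ← hXT]; simp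
  have hcov := kz_cov p hp ν T ε hTpos hε hTε
  rw [hTp1] at hcov
  have hTν : ((x / p : ℝ) : ℂ) ^ (ν / (p + 1 : ℝ)) = (T : ℂ) ^ ν := by
    have hxp : 0 < x / p := by positivity
    rw [Complex.cpow_def_of_ne_zero (by exact_mod_cast hxp.ne'),
      Complex.cpow_def_of_ne_zero (by exact_mod_cast hTpos.ne'),
      ← Complex.ofReal_log hxp.le, ← Complex.ofReal_log hTpos.le, hT, Real.log_rpow hxp]
    push_cast
    congr 1
    ring
  have hsq : Real.sqrt (2 * Real.pi / ((p + 1) * X x)) = S * ε := by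
    rw [hS, hεdef, ← Real.sqrt_inv, ← Real.sqrt_mul (by positivity)]
    congr 1
    field_simp
  have hLx : L x = S * (ε * (T : ℂ) ^ ν * Complex.exp (-(((p + 1) * T ^ p : ℝ) : ℂ))) := by
    rw [hL, hTν, hsq, hTp]; push_cast; ring
  have hne : (ε * (T : ℂ) ^ ν * Complex.exp (-(((p + 1) * T ^ p : ℝ) : ℂ))) ≠ 0 := by
    refine mul_ne_zero (mul_ne_zero (by exact_mod_cast hε.ne') ?_) (Complex.exp_ne_zero _)
    rw [Complex.cpow_def_of_ne_zero (by exact_mod_cast hTpos.ne')]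
    exact Complex.exp_ne_zero _
  have hc := hcore ε hε hεle
  rw [hcov, hLx]
  set A := (ε * (T : ℂ) ^ ν * Complex.exp (-(((p + 1) * T ^ p : ℝ) : ℂ)))
  set I := ∫ s : ℝ, Complex.exp (ν * (ε * s) - ((((Real.exp (p * (ε * s)) - 1) / p
        + Real.exp (-(ε * s)) - 1) / ε ^ 2 : ℝ) : ℂ))
  have hXε : B₁ / (X x : ℂ) = B₁ * ε ^ 2 := by
    rw [← Complex.ofReal_pow, hε2]; push_cast; rfl
  have hid : A * I / (S * A) - (1 + B₁ / (X x : ℂ)) = (I - S * (1 + B₁ * ε ^ 2)) / S := by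
    rw [hXε]; field_simp
  have hX2 : (X x) ^ (-2 : ℝ) = ε ^ 4 := by
    rw [Real.rpow_neg hXpos.le, show ε ^ 4 = (ε ^ 2) ^ 2 by ring, hε2, inv_pow]
    norm_num
  rw [hid, hX2, norm_div, Complex.norm_real, Real.norm_of_nonneg hSpos.le,
    Real.norm_of_nonneg (by positivity : 0 ≤ ε ^ 4), div_mul_eq_mul_div]
  gcongr
end

section
/- Let p > 0, ν ≥ −1/2, and a, b ∈ ℝ, and let I(a,b;−x) = √(2p/π) ∫₀^1 t^(a−1/2) (1−t)^(b−1/2) e^{−xt} K_ν(p/(t(1−t))) dt. Then, as x → +∞, I(a,b;−x) ~ √π · p^{a/2 + 1/4} · x^{−a/2 − 3/4} · exp(−p − 2√(px)); that is, the quotient of I(a,b;−x) by the displayed expression tends to 1 as x → +∞. -/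
open MeasureTheory Set Filter

/-- The modified Bessel function of the second kind, for `w > 0` and real order `ν`:
`K_ν(w) = ∫₀^∞ e^{-w cosh u} cosh(ν u) du`. -/
noncomputable def besselK (ν w : ℝ) : ℝ :=
  ∫ u in Ioi (0 : ℝ), Real.exp (-w * Real.cosh u) * Real.cosh (ν * u)

/-- Scaled phase function. -/
noncomputable def phaseQ (k v : ℝ) : ℝ := 2 * (Real.cosh (k * v) - 1) / k ^ 2

lemma phaseQ_eq (k v : ℝ) : phaseQ k v = (2 * (k⁻¹ * Real.sinh (k * v / 2))) ^ 2 := by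
  have h : Real.cosh (k * v) = Real.cosh (2 * (k * v / 2)) := by congr 1; ring
  unfold phaseQ
  rw [h, Real.cosh_two_mul, Real.cosh_sq]
  ring

lemma phaseQ_ge {k : ℝ} (hk : 0 < k) (v : ℝ) : v ^ 2 ≤ phaseQ k v := by
  rw [phaseQ_eq]
  have key : ∀ y : ℝ, y ^ 2 ≤ Real.sinh y ^ 2 := by
    intro y
    rcases le_total 0 y with h | h
    · exact pow_le_pow_left₀ h (Real.self_le_sinh_iff.2 h) 2
    · have := pow_le_pow_left₀ (neg_nonneg.2 h) (Real.self_le_sinh_iff.2 (neg_nonneg.2 h)) 2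
      simpa using this
  have := mul_le_mul_of_nonneg_left (key (k * v / 2)) (by positivity : 0 ≤ 4 * (k⁻¹) ^ 2)
  calc v ^ 2 = 4 * (k⁻¹) ^ 2 * (k * v / 2) ^ 2 := by field_simp; ring
    _ ≤ _ := this
    _ = _ := by ring

lemma phaseQ_tendsto (v : ℝ) :
    Tendsto (fun k => phaseQ k v) (nhdsWithin 0 (Ioi 0)) (nhds (v ^ 2)) := by
  have hd : HasDerivAt (fun k : ℝ => Real.sinh (k * v / 2)) (v / 2) 0 := by
    have h1 : HasDerivAt (fun k : ℝ => k * v / 2) (v / 2) 0 := by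
      simpa using ((hasDerivAt_id (0 : ℝ)).mul_const v).div_const 2
    have := h1.sinh
    simpa using this
  have h := hd.tendsto_slope_zero
  have h2 : Tendsto (fun k => phaseQ k v) (nhdsWithin 0 {0}ᶜ) (nhds ((2 * (v / 2)) ^ 2)) := by
    simp only [phaseQ_eq]
    refine ((Tendsto.const_mul 2 ?_).pow 2)
    simpa using h
  have h3 : (2 * (v / 2)) ^ 2 = v ^ 2 := by ring
  rw [h3] at h2
  exact h2.mono_left (nhdsWithin_mono _ (fun x hx => ne_of_gt hx))

lemma phaseQ_measurable (k : ℝ) : Measurable (phaseQ k) := by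
  unfold phaseQ
  fun_prop

lemma gauss_bd (r v : ℝ) :
    Real.exp (r * |v|) * Real.exp (-(v ^ 2) / 2) ≤ Real.exp (r ^ 2) * Real.exp (-(1 / 4) * v ^ 2) := by
  rw [← Real.exp_add, ← Real.exp_add]
  apply Real.exp_le_exp.2
  nlinarith [sq_nonneg (|v| / 2 - r), sq_abs v]

lemma cosh_le_exp_abs' (y : ℝ) : Real.cosh y ≤ Real.exp |y| := by
  rw [← Real.cosh_abs, Real.cosh_eq]
  have : Real.exp (-|y|) ≤ Real.exp |y| := Real.exp_le_exp.2 (by linarith [abs_nonneg y])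
  linarith

/-- Scaled Bessel function. -/
noncomputable def scaledK (ν w : ℝ) : ℝ := Real.sqrt w * Real.exp w * besselK ν w

lemma scaledK_eq (ν : ℝ) {w : ℝ} (hw : 0 < w) :
    scaledK ν w = ∫ v in Ioi (0 : ℝ), Real.exp (-(phaseQ (Real.sqrt w)⁻¹ v) / 2) *
      Real.cosh (ν * ((Real.sqrt w)⁻¹ * v)) := by
  have hs : 0 < Real.sqrt w := Real.sqrt_pos.2 hw
  have h := integral_comp_mul_left_Ioi
    (fun u => Real.exp (-w * Real.cosh u) * Real.cosh (ν * u)) 0 (inv_pos.2 hs)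
  simp only [mul_zero, inv_inv, smul_eq_mul] at h
  unfold scaledK besselK
  rw [mul_right_comm, ← h, ← integral_mul_const]
  congr 1
  ext v
  rw [mul_right_comm, ← Real.exp_add]
  congr 2
  unfold phaseQ
  rw [inv_pow, Real.sq_sqrt hw.le]
  field_simp
  ring

lemma scaledK_integrand_bd (ν : ℝ) {k r : ℝ} (hk : 0 < k) (hr : |ν| * k ≤ r) (v : ℝ) :
    ‖Real.exp (-(phaseQ k v) / 2) * Real.cosh (ν * (k * v))‖ ≤
      Real.exp (r ^ 2) * Real.exp (-(1 / 4) * v ^ 2) := by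
  refine le_trans ?_ (gauss_bd r v)
  rw [Real.norm_eq_abs, abs_of_nonneg (mul_nonneg (Real.exp_pos _).le (Real.cosh_pos _).le), mul_comm]
  refine mul_le_mul ?_ ?_ (Real.exp_pos _).le (Real.exp_pos _).le
  · refine (cosh_le_exp_abs' _).trans (Real.exp_le_exp.2 ?_)
    rw [abs_mul, abs_mul, abs_of_pos hk, ← mul_assoc]
    exact mul_le_mul_of_nonneg_right hr (abs_nonneg _)
  · apply Real.exp_le_exp.2
    linarith [phaseQ_ge hk v]

lemma gauss_int (C : ℝ) : Integrable (fun v : ℝ => C * Real.exp (-(1 / 4) * v ^ 2)) :=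
  (integrable_exp_neg_mul_sq (by norm_num)).const_mul C

lemma scaledK_bdd (ν : ℝ) {w₀ : ℝ} (h0 : 0 < w₀) : ∃ C, ∀ w, w₀ ≤ w → |scaledK ν w| ≤ C := by
  refine ⟨∫ v in Ioi (0 : ℝ), Real.exp ((|ν| * (Real.sqrt w₀)⁻¹) ^ 2) *
    Real.exp (-(1 / 4) * v ^ 2), fun w hw => ?_⟩
  have hw0 : 0 < w := h0.trans_le hw
  rw [scaledK_eq ν hw0, ← Real.norm_eq_abs]
  refine norm_integral_le_of_norm_le (gauss_int _).integrableOn (Eventually.of_forall fun v => ?_)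
  refine scaledK_integrand_bd ν (inv_pos.2 (Real.sqrt_pos.2 hw0)) ?_ v
  refine mul_le_mul_of_nonneg_left ?_ (abs_nonneg _)
  exact inv_anti₀ (Real.sqrt_pos.2 h0) (Real.sqrt_le_sqrt hw)

lemma inv_sqrt_tendsto :
    Tendsto (fun w : ℝ => (Real.sqrt w)⁻¹) atTop (nhdsWithin 0 (Ioi 0)) :=
  tendsto_inv_atTop_nhdsGT_zero.comp Real.tendsto_sqrt_atTop

lemma scaledK_tendsto (ν : ℝ) :
    Tendsto (scaledK ν) atTop (nhds (Real.sqrt (Real.pi / 2))) := by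
  have h1 : Tendsto (fun k : ℝ => ∫ v in Ioi (0 : ℝ), Real.exp (-(phaseQ k v) / 2) *
      Real.cosh (ν * (k * v))) (nhdsWithin 0 (Ioi 0))
      (nhds (∫ v in Ioi (0 : ℝ), Real.exp (-(1 / 2) * v ^ 2))) := by
    refine tendsto_integral_filter_of_dominated_convergence
      (fun v => Real.exp (|ν| ^ 2) * Real.exp (-(1 / 4) * v ^ 2)) ?_ ?_
      (gauss_int _).integrableOn ?_
    · refine Eventually.of_forall fun k => Measurable.aestronglyMeasurable ?_
      have := phaseQ_measurable k
      fun_prop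
    · filter_upwards [Ioo_mem_nhdsGT (zero_lt_one' ℝ)] with k hk
      refine Eventually.of_forall fun v => scaledK_integrand_bd ν hk.1 ?_ v
      exact mul_le_of_le_one_right (abs_nonneg _) hk.2.le
    · refine Eventually.of_forall fun v => ?_
      have ha : Tendsto (fun k => Real.exp (-(phaseQ k v) / 2)) (nhdsWithin 0 (Ioi 0))
          (nhds (Real.exp (-(v ^ 2) / 2))) :=
        (Real.continuous_exp.tendsto _).comp ((phaseQ_tendsto v).neg.div_const 2)
      have hb : Tendsto (fun k : ℝ => Real.cosh (ν * (k * v))) (nhdsWithin 0 (Ioi 0))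
          (nhds 1) := by
        have hc : Continuous (fun k : ℝ => Real.cosh (ν * (k * v))) := by fun_prop
        have := hc.tendsto 0
        simp only [zero_mul, mul_zero, Real.cosh_zero] at this
        exact this.mono_left nhdsWithin_le_nhds
      have := ha.mul hb
      rw [mul_one] at this
      convert this using 3
      ring
  rw [integral_gaussian_Ioi] at h1
  have h2 : Real.sqrt (Real.pi / (1 / 2)) / 2 = Real.sqrt (Real.pi / 2) := by
    have : Real.pi / (1 / 2) = 2 ^ 2 * (Real.pi / 2) := by ring
    rw [this, Real.sqrt_mul (by norm_num), Real.sqrt_sq (by norm_num)]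
    ring
  rw [h2] at h1
  refine (h1.comp inv_sqrt_tendsto).congr' ?_
  filter_upwards [eventually_gt_atTop 0] with w hw
  exact (scaledK_eq ν hw).symm

lemma scaledK_measurable (ν : ℝ) : Measurable (scaledK ν) := by
  have : StronglyMeasurable (besselK ν) := by
    unfold besselK
    apply StronglyMeasurable.integral_prod_right
    apply Measurable.stronglyMeasurable
    unfold Function.uncurry
    fun_prop
  have := this.measurable
  unfold scaledK
  fun_prop

lemma subst_exp {c k : ℝ} (hc : 0 < c) (hk : 0 < k) (g : ℝ → ℝ) :
    ∫ t in Ioi (0 : ℝ), g t = ∫ v : ℝ, (c * k * Real.exp (k * v)) * g (c * Real.exp (k * v)) := by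
  have himg : (fun v : ℝ => c * Real.exp (k * v)) '' univ = Ioi 0 := by
    ext t
    simp only [image_univ, mem_range, mem_Ioi]
    constructor
    · rintro ⟨v, rfl⟩
      positivity
    · intro ht
      refine ⟨Real.log (t / c) / k, ?_⟩
      rw [mul_div_cancel₀ _ hk.ne', Real.exp_log (div_pos ht hc)]
      field_simp
  have h := integral_image_eq_integral_abs_deriv_smul (s := univ)
    (f := fun v : ℝ => c * Real.exp (k * v)) (f' := fun v => c * k * Real.exp (k * v))
    MeasurableSet.univ (fun v _ => ?_) ?_ g
  · rw [himg, setIntegral_univ] at h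
    rw [h]
    congr 1
    ext v
    rw [abs_of_pos (by positivity), smul_eq_mul]
  · have h1 : HasDerivAt (fun v : ℝ => k * v) k v := by
      simpa using (hasDerivAt_id v).const_mul k
    have := (h1.exp.const_mul c).hasDerivWithinAt (s := univ)
    exact this.congr_deriv (by ring)
  · intro u _ v _ huv
    have := Real.exp_injective (mul_left_cancel₀ hc.ne' huv)
    exact mul_left_cancel₀ hk.ne' this

lemma laplace_eq {p : ℝ} (hp : 0 < p) (a : ℝ) (F : ℝ → ℝ) {x : ℝ} (hx : 0 < x) :
    ∫ t in Ioi (0 : ℝ), t ^ a * F t * Real.exp (-x * t - p / t) =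
      (p ^ (a / 2 + 1/4) * x ^ (-a / 2 - 3/4) * Real.exp (- 2 * Real.sqrt (p * x))) *
      ∫ v : ℝ, Real.exp ((a + 1) * ((Real.sqrt (Real.sqrt (p * x)))⁻¹ * v)) *
        F (Real.sqrt (p / x) * Real.exp ((Real.sqrt (Real.sqrt (p * x)))⁻¹ * v)) *
        Real.exp (-phaseQ (Real.sqrt (Real.sqrt (p * x)))⁻¹ v) := by
  set l := Real.sqrt (p * x) with hl
  set k := (Real.sqrt l)⁻¹ with hk
  set c := Real.sqrt (p / x) with hc
  have hl0 : 0 < l := Real.sqrt_pos.2 (by positivity)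
  have hk0 : 0 < k := inv_pos.2 (Real.sqrt_pos.2 hl0)
  have hc0 : 0 < c := Real.sqrt_pos.2 (by positivity)
  have hk2 : k ^ 2 = l⁻¹ := by rw [hk, inv_pow, Real.sq_sqrt hl0.le]
  have hxc : x * c = l := by
    rw [hl, hc, ← Real.sqrt_sq hx.le, ← Real.sqrt_mul (sq_nonneg x), Real.sqrt_sq hx.le]
    congr 1
    field_simp
  have hpc : p / c = l := by
    rw [div_eq_iff hc0.ne', hl, hc, ← Real.sqrt_mul (by positivity)]
    have : p * x * (p / x) = p ^ 2 := by field_simp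
    rw [this, Real.sqrt_sq hp.le]
  have hconst : c ^ (a + 1) * k = p ^ (a / 2 + 1/4) * x ^ (-a / 2 - 3/4) := by
    rw [hk, hc, hl]
    simp only [Real.sqrt_eq_rpow]
    rw [← Real.rpow_neg (by positivity), ← Real.rpow_mul (by positivity),
      ← Real.rpow_mul (by positivity), Real.div_rpow hp.le hx.le, Real.mul_rpow hp.le hx.le,
      div_eq_mul_inv, ← Real.rpow_neg hx.le, mul_mul_mul_comm, ← Real.rpow_add hp,
      ← Real.rpow_add hx]
    congr 2 <;> ring
  rw [subst_exp hc0 hk0, ← hconst, ← integral_const_mul]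
  congr 1
  ext v
  set E := Real.exp (k * v) with hE
  have hE0 : 0 < E := Real.exp_pos _
  have e1 : (c * E) ^ a = c ^ a * E ^ a := Real.mul_rpow hc0.le hE0.le
  have e2 : Real.exp ((a + 1) * (k * v)) = E ^ a * E := by
    rw [mul_comm, Real.exp_mul, ← hE, Real.rpow_add hE0, Real.rpow_one]
  have e3 : c ^ (a + 1) = c ^ a * c := by rw [Real.rpow_add hc0, Real.rpow_one]
  have e4 : Real.exp (-x * (c * E) - p / (c * E)) =
      Real.exp (-2 * l) * Real.exp (-phaseQ k v) := by
    rw [← Real.exp_add]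
    congr 1
    unfold phaseQ
    rw [hk2, Real.cosh_eq, Real.exp_neg, ← hE, ← div_div, hpc, neg_mul, ← mul_assoc, hxc]
    field_simp
    ring
  rw [e1, e2, e3, e4]
  ring

lemma laplace_tendsto {p : ℝ} (hp : 0 < p) (a : ℝ) (F : ℝ → ℝ) (hF : Measurable F) (C L : ℝ)
    (hC : ∀ t, |F t| ≤ C) (hL : Tendsto F (nhdsWithin 0 (Ioi 0)) (nhds L)) :
    Tendsto (fun x => ∫ v : ℝ, Real.exp ((a + 1) * ((Real.sqrt (Real.sqrt (p * x)))⁻¹ * v)) *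
        F (Real.sqrt (p / x) * Real.exp ((Real.sqrt (Real.sqrt (p * x)))⁻¹ * v)) *
        Real.exp (-phaseQ (Real.sqrt (Real.sqrt (p * x)))⁻¹ v)) atTop
      (nhds (L * Real.sqrt Real.pi)) := by
  have hk : Tendsto (fun x => (Real.sqrt (Real.sqrt (p * x)))⁻¹) atTop (nhdsWithin 0 (Ioi 0)) :=
    inv_sqrt_tendsto.comp (Real.tendsto_sqrt_atTop.comp (tendsto_id.const_mul_atTop hp))
  have hk' := hk.mono_right nhdsWithin_le_nhds
  have hc : Tendsto (fun x => Real.sqrt (p / x)) atTop (nhds 0) := by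
    have := (Real.continuous_sqrt.tendsto 0).comp (tendsto_const_nhds.div_atTop tendsto_id :
      Tendsto (fun x : ℝ => p / x) atTop (nhds 0))
    simpa [Function.comp_def] using this
  have hC0 : 0 ≤ C := (abs_nonneg _).trans (hC 0)
  have hI : L * Real.sqrt Real.pi = ∫ v : ℝ, L * Real.exp (-1 * v ^ 2) := by
    rw [integral_const_mul, integral_gaussian, div_one]
  rw [hI]
  refine tendsto_integral_filter_of_dominated_convergence
      (fun v => (C * Real.exp (|a + 1| ^ 2)) * Real.exp (-(1 / 4) * v ^ 2)) ?_ ?_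
      (gauss_int _) ?_
  · refine Eventually.of_forall fun x => Measurable.aestronglyMeasurable ?_
    have := phaseQ_measurable (Real.sqrt (Real.sqrt (p * x)))⁻¹
    fun_prop
  · filter_upwards [hk.eventually (Ioo_mem_nhdsGT (zero_lt_one' ℝ))] with x hx
    set k := (Real.sqrt (Real.sqrt (p * x)))⁻¹
    refine Eventually.of_forall fun v => ?_
    rw [mul_assoc, norm_mul, norm_mul, Real.norm_eq_abs, Real.norm_eq_abs, Real.norm_eq_abs,
      abs_of_pos (Real.exp_pos _), abs_of_pos (Real.exp_pos _)]
    have b1 : Real.exp ((a + 1) * (k * v)) ≤ Real.exp (|a + 1| * |v|) := by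
      apply Real.exp_le_exp.2
      refine (le_abs_self _).trans ?_
      rw [abs_mul, abs_mul, abs_of_pos hx.1]
      exact mul_le_mul_of_nonneg_left (mul_le_of_le_one_left (abs_nonneg _) hx.2.le) (abs_nonneg _)
    have b2 : Real.exp (-phaseQ k v) ≤ Real.exp (-(v ^ 2) / 2) := by
      apply Real.exp_le_exp.2
      nlinarith [phaseQ_ge hx.1 v, sq_nonneg v]
    calc _ ≤ Real.exp (|a + 1| * |v|) * (C * Real.exp (-(v ^ 2) / 2)) := by
          refine mul_le_mul b1 (mul_le_mul (hC _) b2 (Real.exp_pos _).le hC0) ?_ (Real.exp_pos _).le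
          positivity
      _ = C * (Real.exp (|a + 1| * |v|) * Real.exp (-(v ^ 2) / 2)) := by ring
      _ ≤ C * (Real.exp (|a + 1| ^ 2) * Real.exp (-(1 / 4) * v ^ 2)) :=
          mul_le_mul_of_nonneg_left (gauss_bd _ _) hC0
      _ = _ := by ring
  · refine Eventually.of_forall fun v => ?_
    have t0 : ∀ r : ℝ, Tendsto (fun x => Real.exp (r * ((Real.sqrt (Real.sqrt (p * x)))⁻¹ * v)))
        atTop (nhds 1) := by
      intro r
      have hcont : Continuous (fun k : ℝ => Real.exp (r * (k * v))) := by fun_prop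
      have := (hcont.tendsto 0).comp hk'
      simpa [Function.comp_def] using this
    have t2 : Tendsto (fun x => F (Real.sqrt (p / x) *
        Real.exp ((Real.sqrt (Real.sqrt (p * x)))⁻¹ * v))) atTop (nhds L) := by
      refine hL.comp (tendsto_nhdsWithin_iff.2 ⟨?_, ?_⟩)
      · have := hc.mul (t0 1)
        simpa using this
      · filter_upwards [eventually_gt_atTop 0] with x hx
        have : 0 < Real.sqrt (p / x) := Real.sqrt_pos.2 (by positivity)
        exact mul_pos this (Real.exp_pos _)
    have t3 : Tendsto (fun x => Real.exp (-phaseQ (Real.sqrt (Real.sqrt (p * x)))⁻¹ v)) atTop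
        (nhds (Real.exp (-(v ^ 2)))) :=
      (Real.continuous_exp.tendsto _).comp (((phaseQ_tendsto v).comp hk).neg)
    have := ((t0 (a + 1)).mul t2).mul t3
    rw [one_mul] at this
    simpa using this

/-- The slowly varying factor. -/
noncomputable def slowF (p ν b : ℝ) : ℝ → ℝ :=
  indicator (Ioo (0 : ℝ) 1) fun t =>
    (1 - t) ^ b * Real.exp (-p / (1 - t)) * scaledK ν (p / (t * (1 - t)))

lemma slowF_measurable (p ν b : ℝ) : Measurable (slowF p ν b) := by
  refine Measurable.indicator ?_ measurableSet_Ioo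
  have h1 := (scaledK_measurable ν).comp
    (by fun_prop : Measurable fun t : ℝ => p / (t * (1 - t)))
  have h2 : Measurable fun t : ℝ => (1 - t) ^ b * Real.exp (-p / (1 - t)) := by fun_prop
  exact h2.mul h1

lemma pow_exp_bdd {p : ℝ} (hp : 0 < p) (b : ℝ) :
    ∃ C, ∀ s ∈ Ioo (0 : ℝ) 1, s ^ b * Real.exp (-p / s) ≤ C := by
  obtain ⟨n, hn⟩ := exists_nat_ge (-b)
  refine ⟨n.factorial / p ^ n, fun s hs => ?_⟩
  have h1 : s ^ b ≤ s ^ (-(n : ℝ)) :=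
    Real.rpow_le_rpow_of_exponent_ge hs.1 hs.2.le (by linarith)
  rw [Real.rpow_neg hs.1.le, Real.rpow_natCast] at h1
  have h2 := Real.pow_div_factorial_le_exp (p / s) (div_pos hp hs.1).le n
  have hs0 := hs.1
  rw [neg_div, Real.exp_neg]
  have hf : (0 : ℝ) < n.factorial := by exact_mod_cast n.factorial_pos
  calc s ^ b * (Real.exp (p / s))⁻¹ ≤ (s ^ n)⁻¹ * ((p / s) ^ n / n.factorial)⁻¹ :=
        mul_le_mul h1 (inv_anti₀ (by positivity) h2) (by positivity) (by positivity)
    _ = _ := by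
        rw [div_pow]
        field_simp

lemma slowF_bdd {p : ℝ} (hp : 0 < p) (ν b : ℝ) : ∃ C, ∀ t, |slowF p ν b t| ≤ C := by
  obtain ⟨C1, h1⟩ := pow_exp_bdd hp b
  obtain ⟨C2, h2⟩ := scaledK_bdd ν hp
  have hC2 : 0 ≤ C2 := (abs_nonneg _).trans (h2 p le_rfl)
  have hC1 : 0 ≤ C1 := le_trans (by positivity) (h1 (1/2) ⟨by norm_num, by norm_num⟩)
  refine ⟨C1 * C2, fun t => ?_⟩
  unfold slowF
  by_cases ht : t ∈ Ioo (0 : ℝ) 1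
  · rw [indicator_of_mem ht, abs_mul]
    have hs : 0 < 1 - t := by linarith [ht.2]
    have hpos := ht.1
    refine mul_le_mul ?_ ?_ (abs_nonneg _) hC1
    · rw [abs_of_nonneg (by positivity)]
      exact h1 (1 - t) ⟨hs, by linarith⟩
    · apply h2
      rw [le_div_iff₀ (by positivity)]
      exact mul_le_of_le_one_right hp.le (by nlinarith [sq_nonneg t])
  · rw [indicator_of_notMem ht, abs_zero]
    positivity

lemma slowF_tendsto {p : ℝ} (hp : 0 < p) (ν b : ℝ) :
    Tendsto (slowF p ν b) (nhdsWithin 0 (Ioi 0))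
      (nhds (Real.exp (-p) * Real.sqrt (Real.pi / 2))) := by
  have h1 : Tendsto (fun t : ℝ => (1 - t) ^ b * Real.exp (-p / (1 - t))) (nhdsWithin 0 (Ioi 0))
      (nhds (Real.exp (-p))) := by
    have hc : ContinuousAt (fun t : ℝ => (1 - t) ^ b * Real.exp (-p / (1 - t))) 0 := by
      refine ContinuousAt.mul ?_ ?_
      · exact ContinuousAt.rpow_const (by fun_prop) (Or.inl (by norm_num))
      · refine Real.continuous_exp.continuousAt.comp ?_
        exact ContinuousAt.div (by fun_prop) (by fun_prop) (by norm_num)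
    have := hc.tendsto
    simp only [sub_zero, Real.one_rpow, one_mul, div_one] at this
    exact this.mono_left nhdsWithin_le_nhds
  have h2 : Tendsto (fun t : ℝ => p / (t * (1 - t))) (nhdsWithin 0 (Ioi 0)) atTop := by
    have h3 : Tendsto (fun t : ℝ => t * (1 - t)) (nhdsWithin 0 (Ioi 0)) (nhdsWithin 0 (Ioi 0)) := by
      refine tendsto_nhdsWithin_iff.2 ⟨?_, ?_⟩
      · have hc : Continuous fun t : ℝ => t * (1 - t) := by fun_prop
        have := hc.tendsto 0
        simp only [zero_mul] at this
        exact this.mono_left nhdsWithin_le_nhds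
      · filter_upwards [Ioo_mem_nhdsGT (zero_lt_one' ℝ)] with t ht
        exact mul_pos ht.1 (by linarith [ht.2])
    have := (tendsto_inv_nhdsGT_zero.comp h3).const_mul_atTop hp
    simpa [div_eq_mul_inv, Function.comp_def] using this
  refine (h1.mul ((scaledK_tendsto ν).comp h2)).congr' ?_
  filter_upwards [Ioo_mem_nhdsGT (zero_lt_one' ℝ)] with t ht
  unfold slowF
  rw [indicator_of_mem ht]
  rfl

lemma integral_rewrite {p : ℝ} (hp : 0 < p) (ν a b x : ℝ) :
    Real.sqrt p * ∫ t in Ioo (0 : ℝ) 1, t ^ (a - 1/2) * (1 - t) ^ (b - 1/2)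
              * Real.exp (-x * t) * besselK ν (p / (t * (1 - t))) =
    ∫ t in Ioi (0 : ℝ), t ^ a * slowF p ν b t * Real.exp (-x * t - p / t) := by
  have hsub : Ioo (0 : ℝ) 1 ⊆ Ioi 0 := fun t ht => ht.1
  rw [← integral_const_mul]
  have hz : ∀ t ∈ Ioi (0 : ℝ) \ Ioo (0 : ℝ) 1,
      t ^ a * slowF p ν b t * Real.exp (-x * t - p / t) = 0 := by
    intro t ht
    unfold slowF
    rw [indicator_of_notMem ht.2]
    ring
  rw [setIntegral_eq_of_subset_of_forall_sdiff_eq_zero measurableSet_Ioi hsub hz]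
  refine setIntegral_congr_fun measurableSet_Ioo fun t ht => ?_
  have ht0 := ht.1
  have hs0 : 0 < 1 - t := by linarith [ht.2]
  simp only [slowF, indicator_of_mem ht, scaledK]
  have e1 : t ^ a = t ^ (a - 1/2) * Real.sqrt t := by
    rw [Real.sqrt_eq_rpow, ← Real.rpow_add ht0]; congr 1; ring
  have e2 : (1 - t) ^ b = (1 - t) ^ (b - 1/2) * Real.sqrt (1 - t) := by
    rw [Real.sqrt_eq_rpow, ← Real.rpow_add hs0]; congr 1; ring
  have e3 : Real.sqrt (p / (t * (1 - t))) = Real.sqrt p / (Real.sqrt t * Real.sqrt (1 - t)) := by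
    rw [Real.sqrt_div hp.le, Real.sqrt_mul ht0.le]
  have e4 : Real.exp (-x * t) = Real.exp (-p / (1 - t)) * Real.exp (p / (t * (1 - t))) *
      Real.exp (-x * t - p / t) := by
    rw [← Real.exp_add, ← Real.exp_add]
    congr 1
    field_simp
    ring
  have hst := Real.sqrt_pos.2 ht0
  have hss := Real.sqrt_pos.2 hs0
  rw [e1, e2, e3, e4]
  field_simp

theorem extended_whittaker_asymptotics (p : ℝ) (hp : 0 < p) (ν : ℝ) (hν : -1/2 ≤ ν)
    (a b : ℝ) :
    Tendsto (fun x : ℝ =>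
      (Real.sqrt (2 * p / Real.pi)
          * ∫ t in Ioo (0 : ℝ) 1, t ^ (a - 1/2) * (1 - t) ^ (b - 1/2)
              * Real.exp (-x * t) * besselK ν (p / (t * (1 - t))))
        / (Real.sqrt Real.pi * p ^ (a / 2 + 1/4) * x ^ (-a / 2 - 3/4)
            * Real.exp (-p - 2 * Real.sqrt (p * x))))
      atTop (nhds 1) := by
  obtain ⟨C, hC⟩ := slowF_bdd hp ν b
  have hlim := laplace_tendsto hp a (slowF p ν b) (slowF_measurable p ν b) C _ hC
    (slowF_tendsto hp ν b)
  have hpi := Real.pi_pos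
  have hspi : 0 < Real.sqrt Real.pi := Real.sqrt_pos.2 hpi
  have hs2 : 0 < Real.sqrt 2 := Real.sqrt_pos.2 two_pos
  have hsp : 0 < Real.sqrt p := Real.sqrt_pos.2 hp
  have h1 := hlim.const_mul (Real.sqrt 2 / Real.pi * Real.exp p)
  have hval : Real.sqrt 2 / Real.pi * Real.exp p *
      (Real.exp (-p) * Real.sqrt (Real.pi / 2) * Real.sqrt Real.pi) = 1 := by
    rw [Real.sqrt_div hpi.le, Real.exp_neg]
    have : Real.pi = Real.sqrt Real.pi * Real.sqrt Real.pi := (Real.mul_self_sqrt hpi.le).symm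
    nth_rewrite 1 [this]
    field_simp
  rw [hval] at h1
  refine h1.congr' ?_
  filter_upwards [eventually_gt_atTop 0] with x hx
  have h2 := (integral_rewrite hp ν a b x).trans (laplace_eq hp a (slowF p ν b) hx)
  set J := ∫ t in Ioo (0 : ℝ) 1, t ^ (a - 1/2) * (1 - t) ^ (b - 1/2)
              * Real.exp (-x * t) * besselK ν (p / (t * (1 - t)))
  have e1 : Real.sqrt (2 * p / Real.pi) = Real.sqrt 2 / Real.sqrt Real.pi * Real.sqrt p := by
    rw [Real.sqrt_div (by positivity), Real.sqrt_mul (by norm_num)]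
    ring
  have e2 : Real.exp (-p - 2 * Real.sqrt (p * x)) =
      (Real.exp p)⁻¹ * Real.exp (-2 * Real.sqrt (p * x)) := by
    rw [← Real.exp_neg, ← Real.exp_add]
    congr 1
    ring
  rw [e1, mul_assoc (Real.sqrt 2 / Real.sqrt Real.pi), h2, e2]
  have hA : 0 < p ^ (a / 2 + 1/4) := Real.rpow_pos_of_pos hp _
  have hB : 0 < x ^ (-a / 2 - 3/4) := Real.rpow_pos_of_pos hx _
  have hE := Real.exp_pos (-2 * Real.sqrt (p * x))
  generalize p ^ (a / 2 + 1/4) = A at *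
  generalize x ^ (-a / 2 - 3/4) = B at *
  generalize Real.exp (-2 * Real.sqrt (p * x)) = E at *
  nth_rewrite 1 [← Real.mul_self_sqrt hpi.le]
  field_simp
end
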